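/- arXiv:0904.2414 — 2 statements merged into one kernel-verified Lean document; each statement's English description precedes it below -/
import Mathlib

section
/- Let N ≥ 5 and suppose the extremal solution u* of (P)_λ is singular (sup_B u* = 1). Then 1 − u*(x) ≤ C₀|x|^{4/3} for all x ∈ B, where C₀ := (λ*/λ̄_N)^{1/3}. -/
open MeasureTheory Metric Set Filter

/-- The Laplacian of `u : ℝ^N → ℝ`, as the sum of pure second partial derivatives. -/
noncomputable def lap {N : ℕ} (u : EuclideanSpace ℝ (Fin N) → ℝ) (x : EuclideanSpace ℝ (Fin N)) : ℝ :=
  ∑ i : Fin N, fderiv ℝ (fun y => fderiv ℝ u y (EuclideanSpace.single i 1)) x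
    (EuclideanSpace.single i 1)

/-- The biharmonic operator `Δ²`. -/
noncomputable def biharm {N : ℕ} (u : EuclideanSpace ℝ (Fin N) → ℝ)
    (x : EuclideanSpace ℝ (Fin N)) : ℝ :=
  lap (lap u) x

/-- A classical solution of `(P)_λ` on the unit ball `B ⊆ ℝ^N`:
`u ∈ C⁴(B̄)`, `0 < u < 1` in `B`, `Δ²u = λ (1-u)⁻²` in `B`, and `u = 0`, `∂_ν u = 0` on `∂B`. -/
structure IsClassicalSolution (N : ℕ) (lam : ℝ) (u : EuclideanSpace ℝ (Fin N) → ℝ) : Prop where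
  contDiffOn : ContDiffOn ℝ 4 u (closedBall (0 : EuclideanSpace ℝ (Fin N)) 1)
  pos : ∀ x ∈ ball (0 : EuclideanSpace ℝ (Fin N)) 1, 0 < u x
  lt_one : ∀ x ∈ ball (0 : EuclideanSpace ℝ (Fin N)) 1, u x < 1
  eqn : ∀ x ∈ ball (0 : EuclideanSpace ℝ (Fin N)) 1, biharm u x = lam / (1 - u x) ^ 2
  bdry : ∀ x : EuclideanSpace ℝ (Fin N), ‖x‖ = 1 → u x = 0
  bdry_deriv : ∀ x : EuclideanSpace ℝ (Fin N), ‖x‖ = 1 →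
    fderivWithin ℝ u (closedBall (0 : EuclideanSpace ℝ (Fin N)) 1) x x = 0

/-- The set of voltages `λ > 0` for which `(P)_λ` admits a classical solution;
the pull-in voltage `λ*` is its supremum. -/
def solSet (N : ℕ) : Set ℝ := {lam | 0 < lam ∧ ∃ u, IsClassicalSolution N lam u}

/-- `λ̄_N = (8/9)(N - 2/3)(N - 8/3)`. -/
noncomputable def lamBar (N : ℕ) : ℝ := (8 / 9) * ((N : ℝ) - 2 / 3) * ((N : ℝ) - 8 / 3)


/-! ### Radial ODE lemmas, in the variable `t = |x|^2` -/

/-- `h = 4 t g'' + 2 N g'` on `(0,1)`, `g1 = g'`, and `t^{N/2} g' → 0` at `0`. -/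
def Lsys (N : ℕ) (g g1 h : ℝ → ℝ) : Prop :=
  (∀ t ∈ Ioo (0:ℝ) 1, HasDerivAt g (g1 t) t) ∧
  (∀ t ∈ Ioo (0:ℝ) 1, ∃ d, HasDerivAt g1 d t ∧ h t = 4 * t * d + 2 * N * g1 t) ∧
  Tendsto (fun t : ℝ => t ^ ((N:ℝ)/2) * g1 t) (nhdsWithin 0 (Ioi 0)) (nhds 0)

lemma Lsys.sub {N : ℕ} {g g1 h k k1 l : ℝ → ℝ} (a : Lsys N g g1 h) (b : Lsys N k k1 l) :
    Lsys N (fun t => g t - k t) (fun t => g1 t - k1 t) (fun t => h t - l t) := by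
  refine ⟨fun t ht => (a.1 t ht).sub (b.1 t ht), fun t ht => ?_, ?_⟩
  · obtain ⟨d, hd, e⟩ := a.2.1 t ht
    obtain ⟨d', hd', e'⟩ := b.2.1 t ht
    refine ⟨d - d', hd.sub hd', ?_⟩
    simp only [e, e']; ring
  · have := a.2.2.sub b.2.2
    simp only [sub_zero] at this
    refine this.congr fun t => by ring

lemma Lsys.smul {N : ℕ} {g g1 h : ℝ → ℝ} (c : ℝ) (a : Lsys N g g1 h) :
    Lsys N (fun t => c * g t) (fun t => c * g1 t) (fun t => c * h t) := by
  refine ⟨fun t ht => (a.1 t ht).const_mul c, fun t ht => ?_, ?_⟩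
  · obtain ⟨d, hd, e⟩ := a.2.1 t ht
    refine ⟨c * d, hd.const_mul c, ?_⟩
    simp only [e]; ring
  · have := a.2.2.const_mul c
    simp only [mul_zero] at this
    refine this.congr fun t => by ring

lemma Lsys.weighted {N : ℕ} {g g1 h : ℝ → ℝ} (a : Lsys N g g1 h) {t : ℝ} (ht : t ∈ Ioo (0:ℝ) 1) :
    HasDerivAt (fun t : ℝ => t ^ ((N:ℝ)/2) * g1 t) (t ^ ((N:ℝ)/2 - 1) * h t / 4) t := by
  obtain ⟨d, hd, e⟩ := a.2.1 t ht
  have h1 := (Real.hasDerivAt_rpow_const (x := t) (p := (N:ℝ)/2) (Or.inl ht.1.ne')).mul hd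
  refine h1.congr_deriv ?_
  have h2 : t ^ ((N:ℝ)/2) = t ^ ((N:ℝ)/2 - 1) * t := by
    rw [← Real.rpow_add_one ht.1.ne']; congr 1; ring
  rw [e, h2]; ring

/-- from positivity of `F = L h` we get `h` monotone. -/
lemma Lsys.monotone {N : ℕ} {h h1 F : ℝ → ℝ} (a : Lsys N h h1 F) {T : ℝ} (hT : T ≤ 1)
    (hF : ∀ t ∈ Ioo 0 T, 0 ≤ F t) : MonotoneOn h (Ioo 0 T) := by
  have sub : ∀ t ∈ Ioo 0 T, t ∈ Ioo (0:ℝ) 1 := fun t ht => ⟨ht.1, ht.2.trans_le hT⟩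
  have qm : MonotoneOn (fun t : ℝ => t ^ ((N:ℝ)/2) * h1 t) (Ioo 0 T) := by
    apply monotoneOn_of_deriv_nonneg (convex_Ioo 0 T)
    · exact fun t ht => (a.weighted (sub t ht)).continuousAt.continuousWithinAt
    · intro t ht
      rw [interior_Ioo] at ht
      exact (a.weighted (sub t ht)).differentiableAt.differentiableWithinAt
    · intro t ht
      rw [interior_Ioo] at ht
      rw [(a.weighted (sub t ht)).deriv]
      have := hF t ht
      have := Real.rpow_nonneg ht.1.le ((N:ℝ)/2 - 1)
      positivity
  have q0 : ∀ t ∈ Ioo 0 T, 0 ≤ h1 t := by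
    intro t ht
    have : 0 ≤ t ^ ((N:ℝ)/2) * h1 t := by
      refine le_of_tendsto a.2.2 ?_
      filter_upwards [Ioo_mem_nhdsGT ht.1] with s hs
      exact qm ⟨hs.1, hs.2.trans ht.2⟩ ht hs.2.le
    exact nonneg_of_mul_nonneg_right this (Real.rpow_pos_of_pos ht.1 _)
  apply monotoneOn_of_deriv_nonneg (convex_Ioo 0 T)
  · exact fun t ht => (a.1 t (sub t ht)).continuousAt.continuousWithinAt
  · intro t ht
    rw [interior_Ioo] at ht
    exact (a.1 t (sub t ht)).differentiableAt.differentiableWithinAt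
  · intro t ht
    rw [interior_Ioo] at ht
    rw [(a.1 t (sub t ht)).deriv]
    exact q0 t ht

lemma Lsys.deriv_nonpos {N : ℕ} {g g1 h : ℝ → ℝ} (a : Lsys N g g1 h) {T l : ℝ} (hT : T ≤ 1)
    (hm : MonotoneOn h (Ioo 0 T)) (hl : Tendsto g1 (nhdsWithin T (Iio T)) (nhds l)) (l0 : l ≤ 0) :
    ∀ t ∈ Ioo 0 T, g1 t ≤ 0 := by
  have sub : ∀ t ∈ Ioo 0 T, t ∈ Ioo (0:ℝ) 1 := fun t ht => ⟨ht.1, ht.2.trans_le hT⟩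
  intro s hs
  by_contra hcon
  push Not at hcon
  set q : ℝ → ℝ := fun t : ℝ => t ^ ((N:ℝ)/2) * g1 t with hq
  have hqs : 0 < q s := mul_pos (Real.rpow_pos_of_pos hs.1 _) hcon
  -- a point with smaller value
  have hev : ∀ᶠ t in nhdsWithin 0 (Ioi (0:ℝ)), q t < q s := a.2.2.eventually (gt_mem_nhds hqs)
  obtain ⟨e, he, hes⟩ := (hev.and (Ioo_mem_nhdsGT hs.1)).exists
  obtain ⟨ξ, hξ, hd⟩ := exists_hasDerivAt_eq_slope q (fun t => t ^ ((N:ℝ)/2 - 1) * h t / 4) hes.2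
    (fun t ht => (a.weighted (sub t ⟨hes.1.trans_le ht.1, ht.2.trans_lt hs.2⟩)).continuousAt.continuousWithinAt)
    (fun t ht => a.weighted (sub t ⟨hes.1.trans ht.1, ht.2.trans hs.2⟩))
  have hpos : 0 < ξ ^ ((N:ℝ)/2 - 1) * h ξ / 4 := by
    rw [hd]; exact div_pos (sub_pos.2 he) (sub_pos.2 hes.2)
  have hξ0 : 0 < ξ := hes.1.trans hξ.1
  have hh : 0 < h ξ := by
    have : 0 < ξ ^ ((N:ℝ)/2 - 1) * h ξ := by linarith
    exact pos_of_mul_pos_right this (Real.rpow_nonneg hξ0.le _)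
  have qm : MonotoneOn q (Ico s T) := by
    apply monotoneOn_of_deriv_nonneg (convex_Ico s T)
    · exact fun t ht =>
        (a.weighted (sub t ⟨hs.1.trans_le ht.1, ht.2⟩)).continuousAt.continuousWithinAt
    · intro t ht
      rw [interior_Ico] at ht
      exact (a.weighted (sub t ⟨hs.1.trans ht.1, ht.2⟩)).differentiableAt.differentiableWithinAt
    · intro t ht
      rw [interior_Ico] at ht
      have ht' : t ∈ Ioo 0 T := ⟨hs.1.trans ht.1, ht.2⟩
      rw [(a.weighted (sub t ht')).deriv]
      have h3 := hm ⟨hξ0, hξ.2.trans hs.2⟩ ht' (hξ.2.trans ht.1).le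
      have := Real.rpow_nonneg ht'.1.le ((N:ℝ)/2 - 1)
      have : 0 ≤ h t := by linarith
      positivity
  have hlim : Tendsto q (nhdsWithin T (Iio T)) (nhds (T ^ ((N:ℝ)/2) * l)) := by
    refine Tendsto.mul ?_ hl
    have : ContinuousAt (fun t : ℝ => t ^ ((N:ℝ)/2)) T :=
      Real.continuousAt_rpow_const _ _ (Or.inl (hs.1.trans hs.2).ne')
    exact this.tendsto.mono_left nhdsWithin_le_nhds
  have : q s ≤ T ^ ((N:ℝ)/2) * l := by
    refine ge_of_tendsto hlim ?_
    filter_upwards [Ioo_mem_nhdsLT hs.2] with t ht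
    exact qm ⟨le_refl _, hs.2⟩ ⟨ht.1.le, ht.2⟩ ht.1.le
  have : T ^ ((N:ℝ)/2) * l ≤ 0 :=
    mul_nonpos_of_nonneg_of_nonpos (Real.rpow_nonneg (hs.1.trans hs.2).le _) l0
  linarith

lemma Lsys.antitone {N : ℕ} {g g1 h h1 F : ℝ → ℝ} (a : Lsys N g g1 h) (b : Lsys N h h1 F)
    {T l : ℝ} (hT : T ≤ 1) (hF : ∀ t ∈ Ioo 0 T, 0 ≤ F t)
    (hl : Tendsto g1 (nhdsWithin T (Iio T)) (nhds l)) (l0 : l ≤ 0) :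
    (∀ t ∈ Ioo 0 T, g1 t ≤ 0) ∧ AntitoneOn g (Ioo 0 T) := by
  have sub : ∀ t ∈ Ioo 0 T, t ∈ Ioo (0:ℝ) 1 := fun t ht => ⟨ht.1, ht.2.trans_le hT⟩
  have h0 := a.deriv_nonpos hT (b.monotone hT hF) hl l0
  refine ⟨h0, ?_⟩
  apply antitoneOn_of_deriv_nonpos (convex_Ioo 0 T)
  · exact fun t ht => (a.1 t (sub t ht)).continuousAt.continuousWithinAt
  · intro t ht
    rw [interior_Ioo] at ht
    exact (a.1 t (sub t ht)).differentiableAt.differentiableWithinAt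
  · intro t ht
    rw [interior_Ioo] at ht
    rw [(a.1 t (sub t ht)).deriv]
    exact h0 t ht

/-- with continuity on `[0,T]`: antitone on the closed interval. -/
lemma Lsys.antitone_Icc {N : ℕ} {g g1 h h1 F : ℝ → ℝ} (a : Lsys N g g1 h) (b : Lsys N h h1 F)
    {T l : ℝ} (hT : T ≤ 1) (hF : ∀ t ∈ Ioo 0 T, 0 ≤ F t)
    (hl : Tendsto g1 (nhdsWithin T (Iio T)) (nhds l)) (l0 : l ≤ 0)
    (hc : ContinuousOn g (Icc 0 T)) : AntitoneOn g (Icc 0 T) := by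
  have sub : ∀ t ∈ Ioo 0 T, t ∈ Ioo (0:ℝ) 1 := fun t ht => ⟨ht.1, ht.2.trans_le hT⟩
  have h0 := (a.antitone b hT hF hl l0).1
  apply antitoneOn_of_deriv_nonpos (convex_Icc 0 T) hc
  · intro t ht
    rw [interior_Icc] at ht
    exact (a.1 t (sub t ht)).differentiableAt.differentiableWithinAt
  · intro t ht
    rw [interior_Icc] at ht
    rw [(a.1 t (sub t ht)).deriv]
    exact h0 t ht

/-- A classical radial solution in the variable `t = |x|^2`. -/
structure RadSol (N : ℕ) (lam : ℝ) (g g1 h h1 : ℝ → ℝ) : Prop where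
  s1 : Lsys N g g1 h
  s2 : Lsys N h h1 (fun t => lam / (1 - g t) ^ 2)
  cont : ContinuousOn g (Icc 0 1)
  one : g 1 = 0
  lim1 : Tendsto g1 (nhdsWithin 1 (Iio 1)) (nhds 0)
  bd : ∀ t ∈ Ico (0:ℝ) 1, 0 < g t ∧ g t < 1

lemma RadSol.antitone {N : ℕ} {lam : ℝ} {g g1 h h1 : ℝ → ℝ} (a : RadSol N lam g g1 h h1)
    (hl : 0 < lam) : AntitoneOn g (Icc 0 1) :=
  a.s1.antitone_Icc a.s2 le_rfl (fun t _ => by positivity) a.lim1 le_rfl a.cont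

/-- The test function `(1-t)^2`. -/
lemma Lsys_quad1 (N : ℕ) (hN : 5 ≤ N) : Lsys N (fun t => (1 - t) ^ 2) (fun t => -2 * (1 - t))
    (fun t => (8 + 4 * N) * t - 4 * N) := by
  refine ⟨fun t _ => ?_, fun t _ => ⟨2, ?_, by ring⟩, ?_⟩
  · have := ((hasDerivAt_id t).const_sub 1).pow 2
    refine this.congr_deriv ?_
    simp
  · have := ((hasDerivAt_id t).const_sub 1).const_mul (-2)
    refine this.congr_deriv ?_
    simp
  · have hc : ContinuousAt (fun t : ℝ => t ^ ((N:ℝ)/2) * (-2 * (1 - t))) 0 := by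
      refine ContinuousAt.mul (Real.continuousAt_rpow_const _ _ (Or.inr (by positivity))) ?_
      fun_prop
    have := hc.tendsto.mono_left (nhdsWithin_le_nhds (s := Ioi 0))
    rwa [Real.zero_rpow (by positivity), zero_mul] at this

lemma Lsys_quad2 (N : ℕ) (hN : 5 ≤ N) : Lsys N (fun t => (8 + 4 * (N:ℝ)) * t - 4 * N)
    (fun _ => 8 + 4 * (N:ℝ)) (fun _ => 8 * N * (N + 2)) := by
  refine ⟨fun t _ => ?_, fun t _ => ⟨0, hasDerivAt_const _ _, by ring⟩, ?_⟩
  · have := ((hasDerivAt_id t).const_mul (8 + 4 * (N:ℝ))).sub_const (4 * (N:ℝ))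
    refine this.congr_deriv ?_
    simp
  · have hc : ContinuousAt (fun t : ℝ => t ^ ((N:ℝ)/2) * (8 + 4 * (N:ℝ))) 0 := by
      refine ContinuousAt.mul (Real.continuousAt_rpow_const _ _ (Or.inr (by positivity))) ?_
      fun_prop
    have := hc.tendsto.mono_left (nhdsWithin_le_nhds (s := Ioi 0))
    rwa [Real.zero_rpow (by positivity), zero_mul] at this

/-- The singular function `t^a`. -/
lemma Lsys_rpow (N : ℕ) (hN : 5 ≤ N) (a : ℝ) (ha : -1 < a) :
    Lsys N (fun t : ℝ => t ^ a) (fun t => a * t ^ (a - 1))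
    (fun t => 2 * a * (2 * a - 2 + N) * t ^ (a - 1)) := by
  have hN' : (5:ℝ) ≤ N := by exact_mod_cast hN
  refine ⟨fun t ht => ?_, fun t ht => ⟨a * ((a - 1) * t ^ (a - 1 - 1)), ?_, ?_⟩, ?_⟩
  · exact Real.hasDerivAt_rpow_const (Or.inl ht.1.ne')
  · exact (Real.hasDerivAt_rpow_const (Or.inl ht.1.ne')).const_mul a
  · have h2 : t ^ (a - 1) = t ^ (a - 1 - 1) * t := by
      rw [← Real.rpow_add_one ht.1.ne']; congr 1; ring
    simp only [h2]; ring
  · have hc : ContinuousAt (fun t : ℝ => a * t ^ ((N:ℝ)/2 + (a - 1))) 0 :=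
      continuousAt_const.mul (Real.continuousAt_rpow_const _ _ (Or.inr (by linarith)))
    have := hc.tendsto.mono_left (nhdsWithin_le_nhds (s := Ioi 0))
    rw [Real.zero_rpow (by linarith), mul_zero] at this
    refine this.congr' ?_
    filter_upwards [self_mem_nhdsWithin] with t ht
    rw [Real.rpow_add ht]; ring

lemma Lsys_const (N : ℕ) (c : ℝ) : Lsys N (fun _ => c) (fun _ => 0) (fun _ => 0) :=
  ⟨fun t _ => hasDerivAt_const _ _, fun t _ => ⟨0, hasDerivAt_const _ _, by ring⟩, by simp⟩

lemma Lsys.congr {N : ℕ} {g g1 h g' g1' h' : ℝ → ℝ} (a : Lsys N g g1 h)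
    (e0 : ∀ t, g t = g' t) (e1 : ∀ t, g1 t = g1' t) (e2 : ∀ t, h t = h' t) : Lsys N g' g1' h' := by
  rw [← funext e0, ← funext e1, ← funext e2]; exact a

/-- tangent line inequality for `s ↦ s⁻²` -/
lemma tangent_ineq {w W : ℝ} (hw : 0 < w) (hW : 0 < W) :
    1 / w ^ 2 + 2 / w ^ 3 * (w - W) ≤ 1 / W ^ 2 := by
  have : 1 / W ^ 2 - (1 / w ^ 2 + 2 / w ^ 3 * (w - W)) = (W - w) ^ 2 * (2 * W + w) / (W ^ 2 * w ^ 3) := by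
    field_simp; ring
  have h2 : 0 ≤ (W - w) ^ 2 * (2 * W + w) / (W ^ 2 * w ^ 3) := by positivity
  linarith

/-- The difference of two ordered solutions is positive and decreasing. -/
lemma diff_pos {N : ℕ} (hN : 5 ≤ N) {l l' : ℝ} {g g1 h h1 k k1 m m1 : ℝ → ℝ}
    (a : RadSol N l g g1 h h1) (b : RadSol N l' k k1 m m1) (hl : 0 < l) (hll : l < l')
    (hgk : ∀ t ∈ Ico (0:ℝ) 1, g t ≤ k t) :
    (∀ t ∈ Ico (0:ℝ) 1, g t < k t) ∧ ∀ t ∈ Ioo (0:ℝ) 1, k1 t - g1 t ≤ 0 := by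
  have hN' : (5:ℝ) ≤ N := by exact_mod_cast hN
  have key : ∀ t ∈ Ioo (0:ℝ) 1, l' - l ≤ l' / (1 - k t) ^ 2 - l / (1 - g t) ^ 2 := by
    intro t ht
    have ht' : t ∈ Ico (0:ℝ) 1 := ⟨ht.1.le, ht.2⟩
    obtain ⟨g0, g2⟩ := a.bd t ht'
    obtain ⟨k0, k2⟩ := b.bd t ht'
    have h1 : 1 / (1 - g t) ^ 2 ≤ 1 / (1 - k t) ^ 2 := by
      apply one_div_le_one_div_of_le
      · have : 0 < 1 - k t := by linarith
        positivity
      · have := hgk t ht'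
        nlinarith
    have h2 : 1 ≤ 1 / (1 - k t) ^ 2 := by
      rw [le_div_iff₀ (by have : 0 < 1 - k t := by linarith
                          positivity)]
      nlinarith
    have e1 : l' / (1 - k t) ^ 2 - l / (1 - g t) ^ 2 = (l' - l) * (1 / (1 - k t) ^ 2)
      + l * (1 / (1 - k t) ^ 2 - 1 / (1 - g t) ^ 2) := by ring
    rw [e1]
    have h3 : 0 ≤ l * (1 / (1 - k t) ^ 2 - 1 / (1 - g t) ^ 2) := mul_nonneg hl.le (by linarith)
    nlinarith
  constructor
  · set κ : ℝ := (l' - l) / (8 * N * (N + 2)) with hκ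
    have hκ0 : 0 < κ := div_pos (by linarith) (by positivity)
    have A1 := (b.s1.sub a.s1).sub ((Lsys_quad1 N hN).smul κ)
    have A2 := (b.s2.sub a.s2).sub ((Lsys_quad2 N hN).smul κ)
    have hlim := (b.lim1.sub a.lim1).sub
      (((by fun_prop : Continuous fun t : ℝ => κ * (-2 * (1 - t))).tendsto 1).mono_left
        (nhdsWithin_le_nhds (s := Iio 1)))
    have anti := A1.antitone_Icc A2 le_rfl (fun t ht => by
      have := key t ht
      have e : κ * (8 * N * (N + 2)) = l' - l := by
        rw [hκ]; field_simp
      rw [e]; linarith) hlim (by simp)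
      ((b.cont.sub a.cont).sub (by fun_prop))
    intro t ht
    have := anti ⟨ht.1, ht.2.le⟩ ⟨zero_le_one, le_rfl⟩ ht.2.le
    simp only [a.one, b.one] at this
    have h3 : 0 < κ * (1 - t) ^ 2 := mul_pos hκ0 (by have : 0 < 1 - t := by linarith [ht.2]
                                                     positivity)
    norm_num at this
    linarith
  · exact ((b.s1.sub a.s1).antitone (b.s2.sub a.s2) le_rfl
      (fun t ht => by have := key t ht; linarith) (b.lim1.sub a.lim1) (by simp)).1

lemma hasDeriv_tendsto_left {N : ℕ} {g g1 h : ℝ → ℝ} (a : Lsys N g g1 h) {T : ℝ}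
    (hT : T ∈ Ioo (0:ℝ) 1) : Tendsto g1 (nhdsWithin T (Iio T)) (nhds (g1 T)) := by
  obtain ⟨d, hd, -⟩ := a.2.1 T hT
  exact hd.continuousAt.tendsto.mono_left nhdsWithin_le_nhds

/-- Main comparison: with `D = (1-g) - C t^{2/3}`, `D(T) ≥ 0`, `D'(T) ≤ 0` we get
`1 - g 0 ≥ D(T)`. -/
lemma main_comparison {N : ℕ} (hN : 5 ≤ N) {l l' C T : ℝ} {g g1 h h1 k k1 m m1 : ℝ → ℝ}
    (a : RadSol N l g g1 h h1) (b : RadSol N l' k k1 m m1) (hl : 0 < l) (hll : l < l')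
    (hgk : ∀ t ∈ Ico (0:ℝ) 1, g t ≤ k t) (hC : 0 < C) (hCl : l ≤ C ^ 3 * lamBar N)
    (hT : T ∈ Ioo (0:ℝ) 1) (hD : 0 ≤ 1 - g T - C * T ^ ((2:ℝ)/3))
    (hD1 : - g1 T - C * ((2:ℝ)/3 * T ^ ((2:ℝ)/3 - 1)) ≤ 0) :
    1 - g T - C * T ^ ((2:ℝ)/3) ≤ 1 - g 0 := by
  obtain ⟨φpos, φ1⟩ := diff_pos hN a b hl hll hgk
  set W : ℝ → ℝ := fun t => C * t ^ ((2:ℝ)/3) with hW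
  set W1 : ℝ → ℝ := fun t => C * ((2:ℝ)/3 * t ^ ((2:ℝ)/3 - 1)) with hW1
  have Wc : Continuous W := by
    rw [hW]
    exact continuous_const.mul (Real.continuous_rpow_const (by norm_num))
  have LW := (Lsys_rpow N hN ((2:ℝ)/3) (by norm_num)).smul C
  have LW2 := ((Lsys_rpow N hN ((2:ℝ)/3 - 1) (by norm_num)).smul
    (2 * ((2:ℝ)/3) * (2 * ((2:ℝ)/3) - 2 + N))).smul C
  have Wpos : ∀ t ∈ Ioo (0:ℝ) 1, 0 < W t := fun t ht => mul_pos hC (Real.rpow_pos_of_pos ht.1 _)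
  -- value of the bilaplacian of `W`
  have FW : ∀ t ∈ Ioo (0:ℝ) 1, C * (2 * ((2:ℝ)/3) * (2 * ((2:ℝ)/3) - 2 + N) *
      (2 * ((2:ℝ)/3 - 1) * (2 * ((2:ℝ)/3 - 1) - 2 + N) * t ^ ((2:ℝ)/3 - 1 - 1)))
      = - (C ^ 3 * lamBar N) * (1 / (W t) ^ 2) := by
    intro t ht
    have e1 : (W t) ^ 2 = C ^ 2 * t ^ ((4:ℝ)/3) := by
      rw [hW]; simp only
      rw [mul_pow, ← Real.rpow_natCast (t ^ ((2:ℝ)/3)), ← Real.rpow_mul ht.1.le]; norm_num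
    have e2 : t ^ ((2:ℝ)/3 - 1 - 1) = (t ^ ((4:ℝ)/3))⁻¹ := by
      rw [← Real.rpow_neg ht.1.le]; norm_num
    have e3 : 0 < t ^ ((4:ℝ)/3) := Real.rpow_pos_of_pos ht.1 _
    rw [e1, e2]
    unfold lamBar
    field_simp
    ring
  -- ψ = W - (1 - g) ≤ 0 on [0, T]
  have hsub : Icc 0 T ⊆ Ico (0:ℝ) 1 := fun t ht => ⟨ht.1, ht.2.trans_lt hT.2⟩
  have hsub' : Icc 0 T ⊆ Icc (0:ℝ) 1 := fun t ht => ⟨ht.1, ht.2.trans hT.2.le⟩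
  have hsubo : ∀ t ∈ Ioo 0 T, t ∈ Ioo (0:ℝ) 1 := fun t ht => ⟨ht.1, ht.2.trans hT.2⟩
  have gc := a.cont.mono hsub'
  have kc := b.cont.mono hsub'
  have hψ : ∀ t ∈ Icc 0 T, W t - (1 - g t) ≤ 0 := by
    by_contra hcon
    push Not at hcon
    obtain ⟨t1, ht1, hpos⟩ := hcon
    obtain ⟨t0, ht0, hmax⟩ := isCompact_Icc.exists_isMaxOn (nonempty_Icc.2 hT.1.le)
      (show ContinuousOn (fun t => (W t - (1 - g t)) / (k t - g t)) (Icc 0 T) from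
        ContinuousOn.div (Wc.continuousOn.sub (continuousOn_const.sub gc)) (kc.sub gc)
          (fun t ht => by have := φpos t (hsub ht); linarith))
    set τ := (W t0 - (1 - g t0)) / (k t0 - g t0) with hτ
    have hτ0 : 0 < τ := lt_of_lt_of_le (div_pos hpos (by have := φpos t1 (hsub ht1); linarith))
      (hmax ht1)
    have hχ : ∀ t ∈ Icc 0 T, 0 ≤ τ * (k t - g t) - (W t - (1 - g t)) := by
      intro t ht
      have := hmax ht
      simp only at this
      change _ ≤ τ at this
      rw [div_le_iff₀ (by have := φpos t (hsub ht); linarith)] at this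
      linarith
    have hχ0 : τ * (k t0 - g t0) - (W t0 - (1 - g t0)) = 0 := by
      rw [hτ, div_mul_cancel₀ _ (by have := φpos t0 (hsub ht0); linarith)]; ring
    have A1 := ((b.s1.sub a.s1).smul τ).sub (LW.sub ((Lsys_const N 1).sub a.s1))
    have A2 := ((b.s2.sub a.s2).smul τ).sub (LW2.sub ((Lsys_const N 0).sub a.s2))
    have anti := A1.antitone_Icc A2 hT.2.le (fun t ht => by
      have ht' := hsubo t ht
      have ht'' := hsub ⟨ht.1.le, ht.2.le⟩
      obtain ⟨g0, g2⟩ := a.bd t ht''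
      obtain ⟨k0, k2⟩ := b.bd t ht''
      have hw : 0 < 1 - g t := by linarith
      have hw' : 0 < 1 - k t := by linarith
      have T1 := tangent_ineq hw (Wpos t ht')
      have T2 := tangent_ineq hw hw'
      have X := hχ t ⟨ht.1.le, ht.2.le⟩
      rw [FW t ht']
      have e1 : l' / (1 - k t) ^ 2 = l' * (1 / (1 - k t) ^ 2) := by ring
      have e2 : l / (1 - g t) ^ 2 = l * (1 / (1 - g t) ^ 2) := by ring
      rw [e1, e2]
      have p1 : l * (1 / (1 - k t) ^ 2) ≤ l' * (1 / (1 - k t) ^ 2) :=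
        mul_le_mul_of_nonneg_right hll.le (by positivity)
      have p2 : l * (1 / (W t) ^ 2) ≤ (C ^ 3 * lamBar N) * (1 / (W t) ^ 2) :=
        mul_le_mul_of_nonneg_right hCl (by positivity)
      have p3 := mul_le_mul_of_nonneg_left T1 hl.le
      have p4 := mul_le_mul_of_nonneg_left T2 hl.le
      have p5 : 0 ≤ l * (2 / (1 - g t) ^ 3) * (τ * (k t - g t) - (W t - (1 - g t))) :=
        mul_nonneg (by positivity) X
      have p6 : 0 ≤ τ * (l' * (1 / (1 - k t) ^ 2) - (l * (1 / (1 - g t) ^ 2 +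
        2 / (1 - g t) ^ 3 * (1 - g t - (1 - k t))))) := mul_nonneg hτ0.le (by linarith)
      have p7 : 0 ≤ C ^ 3 * lamBar N * (1 / (W t) ^ 2) - (l * (1 / (1 - g t) ^ 2 +
        2 / (1 - g t) ^ 3 * (1 - g t - W t))) := by linarith
      linear_combination p5 + p6 + p7) (hasDeriv_tendsto_left A1 hT) (by
        have h1 := φ1 T hT
        have h2 : τ * (k1 T - g1 T) ≤ 0 := mul_nonpos_of_nonneg_of_nonpos hτ0.le h1
        linarith)
      (((kc.sub gc).const_mul τ).sub (Wc.continuousOn.sub (continuousOn_const.sub gc)))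
    have h3 := anti ht0 ⟨hT.1.le, le_rfl⟩ ht0.2
    simp only at h3
    change τ * (k T - g T) - (W T - (1 - g T)) ≤ τ * (k t0 - g t0) - (W t0 - (1 - g t0)) at h3
    have h4 : 0 < τ * (k T - g T) := mul_pos hτ0 (by have := φpos T ⟨hT.1.le, hT.2⟩; linarith)
    rw [hχ0] at h3
    have h5 : W T = C * T ^ ((2:ℝ)/3) := rfl
    linarith
  -- D is antitone
  have B1 := ((Lsys_const N 1).sub a.s1).sub LW
  have B2 := ((Lsys_const N 0).sub a.s2).sub LW2
  have anti := B1.antitone_Icc B2 hT.2.le (fun t ht => by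
      have ht' := hsubo t ht
      have ht'' := hsub ⟨ht.1.le, ht.2.le⟩
      obtain ⟨g0, g2⟩ := a.bd t ht''
      have hw : 0 < 1 - g t := by linarith
      rw [FW t ht']
      have e2 : l / (1 - g t) ^ 2 = l * (1 / (1 - g t) ^ 2) := by ring
      rw [e2]
      have q := hψ t ⟨ht.1.le, ht.2.le⟩
      have hWp := Wpos t ht'
      have p2 : l * (1 / (W t) ^ 2) ≤ (C ^ 3 * lamBar N) * (1 / (W t) ^ 2) :=
        mul_le_mul_of_nonneg_right hCl (by positivity)
      have p1 : 1 / (1 - g t) ^ 2 ≤ 1 / (W t) ^ 2 := by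
        apply one_div_le_one_div_of_le (by positivity)
        nlinarith
      have p3 := mul_le_mul_of_nonneg_left p1 hl.le
      linarith) (hasDeriv_tendsto_left B1 hT) (by simpa using hD1)
      ((continuousOn_const.sub gc).sub Wc.continuousOn)
  have h3 := anti ⟨le_rfl, hT.1.le⟩ ⟨hT.1.le, le_rfl⟩ hT.1.le
  simp only at h3
  rw [Real.zero_rpow (by norm_num)] at h3
  linarith

/-! ### Facts about the Laplacian -/

lemma lap_congr {N : ℕ} {f g : EuclideanSpace ℝ (Fin N) → ℝ} {x : EuclideanSpace ℝ (Fin N)}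
    (h : f =ᶠ[nhds x] g) : lap f x = lap g x := by
  unfold lap
  refine Finset.sum_congr rfl fun i _ => ?_
  have h1 : (fun y => fderiv ℝ f y (EuclideanSpace.single i 1)) =ᶠ[nhds x]
      (fun y => fderiv ℝ g y (EuclideanSpace.single i 1)) :=
    (h.fderiv (𝕜 := ℝ)).mono fun y hy => by simp only [hy]
  rw [h1.fderiv_eq]

lemma contDiffAt_fderiv_apply {N : ℕ} {u : EuclideanSpace ℝ (Fin N) → ℝ}
    {x : EuclideanSpace ℝ (Fin N)} {n m : WithTop ℕ∞} (hu : ContDiffAt ℝ n u x) (h : m + 1 ≤ n)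
    (e : EuclideanSpace ℝ (Fin N)) : ContDiffAt ℝ m (fun y => fderiv ℝ u y e) x :=
  (hu.fderiv_right h).clm_apply contDiffAt_const

lemma contDiffAt_lap {N : ℕ} {u : EuclideanSpace ℝ (Fin N) → ℝ}
    {x : EuclideanSpace ℝ (Fin N)} (hu : ContDiffAt ℝ 4 u x) : ContDiffAt ℝ 2 (lap u) x := by
  unfold lap
  refine ContDiffAt.sum fun i _ => ?_
  exact contDiffAt_fderiv_apply (contDiffAt_fderiv_apply (m := 3) hu (by norm_num) _)
    (by norm_num) _

lemma lap_eq_laplacian {N : ℕ} {u : EuclideanSpace ℝ (Fin N) → ℝ}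
    {x : EuclideanSpace ℝ (Fin N)} (hu : ContDiffAt ℝ 2 u x) :
    lap u x = Laplacian.laplacian u x := by
  rw [InnerProductSpace.laplacian_eq_iteratedFDeriv_orthonormalBasis u
    (EuclideanSpace.basisFun (Fin N) ℝ)]
  unfold lap
  refine Finset.sum_congr rfl fun i _ => ?_
  have hd : DifferentiableAt ℝ (fderiv ℝ u) x :=
    (hu.fderiv_right (m := 1) (by norm_num)).differentiableAt (by norm_num)
  rw [iteratedFDeriv_two_apply, fderiv_clm_apply hd (differentiableAt_const _)]
  simp

lemma lap_comp_isometry {N : ℕ} {u : EuclideanSpace ℝ (Fin N) → ℝ}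
    {x : EuclideanSpace ℝ (Fin N)}
    (A : EuclideanSpace ℝ (Fin N) ≃ₗᵢ[ℝ] EuclideanSpace ℝ (Fin N))
    (hu : ContDiffAt ℝ 2 u (A x)) : lap (u ∘ A) x = lap u (A x) := by
  have hc : ContDiffAt ℝ 2 (u ∘ A) x := hu.comp x A.contDiff.contDiffAt
  rw [lap_eq_laplacian hc, lap_eq_laplacian hu,
    InnerProductSpace.laplacian_eq_iteratedFDeriv_orthonormalBasis u
      ((EuclideanSpace.basisFun (Fin N) ℝ).map A),
    InnerProductSpace.laplacian_eq_iteratedFDeriv_orthonormalBasis (u ∘ A)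
      ((EuclideanSpace.basisFun (Fin N) ℝ))]
  refine Finset.sum_congr rfl fun i _ => ?_
  have := A.toContinuousLinearEquiv.iteratedFDerivWithin_comp_right u (s := univ)
    uniqueDiffOn_univ (x := x) (mem_univ _) 2
  rw [preimage_univ, iteratedFDerivWithin_univ, iteratedFDerivWithin_univ] at this
  change iteratedFDeriv ℝ 2 (u ∘ A) x = _ at this
  rw [this, ContinuousMultilinearMap.compContinuousLinearMap_apply]
  change iteratedFDeriv ℝ 2 u (A x) _ = _
  congr 1
  ext j
  fin_cases j <;> simp

lemma hasFDerivAt_comp_normSq {N : ℕ} {g : ℝ → ℝ} {d : ℝ} {y : EuclideanSpace ℝ (Fin N)}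
    (hg : HasDerivAt g d (‖y‖ ^ 2)) :
    HasFDerivAt (fun y : EuclideanSpace ℝ (Fin N) => g (‖y‖ ^ 2))
      (d • ((2:ℝ) • innerSL ℝ y)) y := by
  have h1 := (hasStrictFDerivAt_norm_sq y).hasFDerivAt
  have := hg.comp_hasFDerivAt y h1
  refine this.congr_fderiv ?_
  ext z
  simp

lemma lap_normSq {N : ℕ} {g g1 : ℝ → ℝ} {g2 : ℝ} {x : EuclideanSpace ℝ (Fin N)}
    (h1 : ∀ᶠ t in nhds (‖x‖ ^ 2), HasDerivAt g (g1 t) t) (h2 : HasDerivAt g1 g2 (‖x‖ ^ 2)) :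
    lap (fun y => g (‖y‖ ^ 2)) x = 4 * ‖x‖ ^ 2 * g2 + 2 * N * g1 (‖x‖ ^ 2) := by
  unfold lap
  have key : ∀ i : Fin N, fderiv ℝ (fun y => fderiv ℝ
      (fun y : EuclideanSpace ℝ (Fin N) => g (‖y‖ ^ 2)) y (EuclideanSpace.single i 1)) x
        (EuclideanSpace.single i 1) = 4 * g2 * (x i) ^ 2 + 2 * g1 (‖x‖ ^ 2) := by
    intro i
    have hcont : ContinuousAt (fun y : EuclideanSpace ℝ (Fin N) => ‖y‖ ^ 2) x := by fun_prop
    have e1 : (fun y => fderiv ℝ (fun y : EuclideanSpace ℝ (Fin N) => g (‖y‖ ^ 2)) y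
        (EuclideanSpace.single i 1)) =ᶠ[nhds x] fun y => g1 (‖y‖ ^ 2) * (2 * y i) := by
      filter_upwards [hcont.eventually h1] with y hy
      rw [(hasFDerivAt_comp_normSq hy).fderiv]
      simp [EuclideanSpace.inner_single_right]
    rw [e1.fderiv_eq]
    have hp : HasFDerivAt (fun y : EuclideanSpace ℝ (Fin N) => 2 * y i)
        ((2:ℝ) • (EuclideanSpace.proj i : EuclideanSpace ℝ (Fin N) →L[ℝ] ℝ)) x :=
      (EuclideanSpace.proj i : EuclideanSpace ℝ (Fin N) →L[ℝ] ℝ).hasFDerivAt.const_mul 2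
    have hm : HasFDerivAt (fun y : EuclideanSpace ℝ (Fin N) => g1 (‖y‖ ^ 2) * (2 * y i)) _ x :=
      (hasFDerivAt_comp_normSq h2).mul hp
    rw [hm.fderiv]
    simp [EuclideanSpace.inner_single_right]
    ring
  rw [Finset.sum_congr rfl fun i _ => key i, Finset.sum_add_distrib, ← Finset.mul_sum,
    ← EuclideanSpace.real_norm_sq_eq]
  simp
  ring

/-- radial on the unit ball -/
def RadialOn {N : ℕ} (v : EuclideanSpace ℝ (Fin N) → ℝ) : Prop :=
  ∀ x ∈ ball (0 : EuclideanSpace ℝ (Fin N)) 1, ∀ y, ‖x‖ = ‖y‖ → v x = v y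

lemma exists_isometry {N : ℕ} {x y : EuclideanSpace ℝ (Fin N)} (h : ‖x‖ = ‖y‖) :
    ∃ A : EuclideanSpace ℝ (Fin N) ≃ₗᵢ[ℝ] EuclideanSpace ℝ (Fin N), A x = y :=
  ⟨_, Submodule.reflection_sub h⟩

lemma RadialOn.lap {N : ℕ} {v : EuclideanSpace ℝ (Fin N) → ℝ} (h : RadialOn v)
    (hv : ∀ x ∈ ball (0 : EuclideanSpace ℝ (Fin N)) 1, ContDiffAt ℝ 2 v x) : RadialOn (lap v) := by
  intro x hx y hxy
  obtain ⟨A, rfl⟩ := exists_isometry hxy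
  have hA : A x ∈ ball (0 : EuclideanSpace ℝ (Fin N)) 1 := by
    simpa [mem_ball_zero_iff] using hx
  rw [← lap_comp_isometry A (hv _ hA)]
  apply lap_congr
  filter_upwards [isOpen_ball.mem_nhds hx] with z hz
  exact h z hz _ (by simp)

lemma Lsys_of_radial {N : ℕ} (hN : 5 ≤ N) {v : EuclideanSpace ℝ (Fin N) → ℝ} (h : RadialOn v)
    (hv : ∀ x ∈ ball (0 : EuclideanSpace ℝ (Fin N)) 1, ContDiffAt ℝ 2 v x)
    {e : EuclideanSpace ℝ (Fin N)} (he : ‖e‖ = 1) :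
    Lsys N (fun t => v (√t • e)) (fun t => fderiv ℝ v (√t • e) e / (2 * √t))
      (fun t => lap v (√t • e)) := by
  have hN' : (5:ℝ) ≤ N := by exact_mod_cast hN
  have nrm : ∀ t : ℝ, ‖√t • e‖ = √t := fun t => by
    rw [norm_smul, he, mul_one, Real.norm_of_nonneg (Real.sqrt_nonneg _)]
  have mem : ∀ t ∈ Ioo (0:ℝ) 1, √t • e ∈ ball (0 : EuclideanSpace ℝ (Fin N)) 1 := by
    intro t ht
    rw [mem_ball_zero_iff, nrm, Real.sqrt_lt' one_pos]
    simpa using ht.2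
  have dcurve : ∀ t ∈ Ioo (0:ℝ) 1, HasDerivAt (fun t : ℝ => √t • e) ((1 / (2 * √t)) • e) t :=
    fun t ht => (Real.hasDerivAt_sqrt ht.1.ne').smul_const e
  have D1 : ∀ t ∈ Ioo (0:ℝ) 1, HasDerivAt (fun t => v (√t • e))
      (fderiv ℝ v (√t • e) e / (2 * √t)) t := by
    intro t ht
    have h1 := ((hv _ (mem t ht)).differentiableAt (by norm_num)).hasFDerivAt
    have h2 := h1.comp_hasDerivAt t (dcurve t ht)
    refine h2.congr_deriv ?_
    simp
    ring
  refine ⟨D1, ?_, ?_⟩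
  · intro t ht
    have hsq : 0 < √t := Real.sqrt_pos.2 ht.1
    have hd : DifferentiableAt ℝ (fun t => fderiv ℝ v (√t • e) e / (2 * √t)) t := by
      refine DifferentiableAt.div ?_ ?_ (by positivity)
      · have h1 : DifferentiableAt ℝ (fun y => fderiv ℝ v y e) (√t • e) :=
          (contDiffAt_fderiv_apply (m := 1) (hv _ (mem t ht)) (by norm_num) e).differentiableAt
            (by norm_num)
        exact h1.comp t (dcurve t ht).differentiableAt
      · exact ((Real.hasDerivAt_sqrt ht.1.ne').differentiableAt).const_mul 2
    refine ⟨_, hd.hasDerivAt, ?_⟩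
    have n2 : ‖√t • e‖ ^ 2 = t := by rw [nrm, Real.sq_sqrt ht.1.le]
    have e1 : lap v (√t • e) = lap (fun y => (fun t => v (√t • e)) (‖y‖ ^ 2)) (√t • e) := by
      apply lap_congr
      filter_upwards [isOpen_ball.mem_nhds (mem t ht)] with z hz
      refine h z hz _ ?_
      rw [nrm, Real.sqrt_sq (norm_nonneg _)]
    beta_reduce
    rw [e1, lap_normSq (g := fun t => v (√t • e)) (g1 := fun t => fderiv ℝ v (√t • e) e / (2 * √t))
      (g2 := deriv (fun t => fderiv ℝ v (√t • e) e / (2 * √t)) t), n2]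
    · rw [n2]
      filter_upwards [isOpen_Ioo.mem_nhds ht] with s hs using D1 s hs
    · rw [n2]; exact hd.hasDerivAt
  · have c1 : ContinuousAt (fun y => fderiv ℝ v y e) (√0 • e) :=
      (contDiffAt_fderiv_apply (m := 1) (hv _ (by simp)) (by norm_num) e).continuousAt
    have c2 : ContinuousAt (fun t : ℝ => √t • e) 0 :=
      (Real.continuous_sqrt.continuousAt).smul continuousAt_const
    have c3 : ContinuousAt (fun t : ℝ => fderiv ℝ v (√t • e) e) 0 :=
      ContinuousAt.comp (f := fun t : ℝ => √t • e) c1 c2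
    have c4 : ContinuousAt (fun t : ℝ => t ^ ((N:ℝ)/2 - 1/2) / 2) 0 :=
      (Real.continuousAt_rpow_const _ _ (Or.inr (by linarith))).div_const 2
    have := (c4.mul c3).tendsto.mono_left (nhdsWithin_le_nhds (s := Ioi 0))
    simp only [Pi.mul_apply] at this
    rw [Real.zero_rpow (by linarith), zero_div, zero_mul] at this
    refine this.congr' ?_
    filter_upwards [self_mem_nhdsWithin] with t ht
    have ht' : (0:ℝ) < t := ht
    simp only [Pi.mul_apply]
    rw [Real.rpow_sub ht', ← Real.sqrt_eq_rpow]
    have := Real.sqrt_pos.2 ht'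
    field_simp

lemma IsClassicalSolution.contDiffAt {N : ℕ} {lam : ℝ} {u : EuclideanSpace ℝ (Fin N) → ℝ}
    (hu : IsClassicalSolution N lam u) :
    ∀ x ∈ ball (0 : EuclideanSpace ℝ (Fin N)) 1, ContDiffAt ℝ 4 u x := fun x hx =>
  (hu.contDiffOn x (ball_subset_closedBall hx)).contDiffAt
    (mem_of_superset (isOpen_ball.mem_nhds hx) ball_subset_closedBall)

lemma uniqueDiff_cball (N : ℕ) : UniqueDiffOn ℝ (closedBall (0 : EuclideanSpace ℝ (Fin N)) 1) :=
  uniqueDiffOn_convex (convex_closedBall _ _) (by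
    rw [interior_closedBall _ one_ne_zero]; exact ⟨0, by simp⟩)

lemma radSol_of_classical {N : ℕ} (hN : 5 ≤ N) {lam : ℝ} {u : EuclideanSpace ℝ (Fin N) → ℝ}
    (hu : IsClassicalSolution N lam u) (hr : RadialOn u)
    {e : EuclideanSpace ℝ (Fin N)} (he : ‖e‖ = 1) :
    ∃ g1 h h1, RadSol N lam (fun t => u (√t • e)) g1 h h1 := by
  have nrm : ∀ t : ℝ, ‖√t • e‖ = √t := fun t => by
    rw [norm_smul, he, mul_one, Real.norm_of_nonneg (Real.sqrt_nonneg _)]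
  have mem : ∀ t : ℝ, t < 1 → √t • e ∈ ball (0 : EuclideanSpace ℝ (Fin N)) 1 := by
    intro t ht
    rw [mem_ball_zero_iff, nrm, Real.sqrt_lt' one_pos]
    simpa using ht
  have mem' : ∀ t : ℝ, t ≤ 1 → √t • e ∈ closedBall (0 : EuclideanSpace ℝ (Fin N)) 1 := by
    intro t ht
    rw [mem_closedBall_zero_iff, nrm, Real.sqrt_le_one]
    exact ht
  have hv := hu.contDiffAt
  have hv2 : ∀ x ∈ ball (0 : EuclideanSpace ℝ (Fin N)) 1, ContDiffAt ℝ 2 u x :=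
    fun x hx => (hv x hx).of_le (by norm_num)
  have S1 := Lsys_of_radial hN hr hv2 he
  have S2 := Lsys_of_radial hN (hr.lap hv2) (fun x hx => contDiffAt_lap (hv x hx)) he
  have csq : Continuous fun t : ℝ => √t • e := Real.continuous_sqrt.smul continuous_const
  refine ⟨_, _, _, S1, ⟨S2.1, ?_, S2.2.2⟩, ?_, ?_, ?_, ?_⟩
  · intro t ht
    obtain ⟨d, hd, hh⟩ := S2.2.1 t ht
    exact ⟨d, hd, by rw [← hh]; exact (hu.eqn _ (mem t ht.2)).symm⟩
  · exact hu.contDiffOn.continuousOn.comp csq.continuousOn (fun t ht => mem' t ht.2)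
  · exact hu.bdry _ (by simp [he])
  · have c1 := (hu.contDiffOn.continuousOn_fderivWithin (uniqueDiff_cball N) (by norm_num))
    have c2 : ContinuousOn (fun t : ℝ => fderivWithin ℝ u (closedBall 0 1) (√t • e) e / (2 * √t))
        (Ioc 0 1) := by
      refine ContinuousOn.div ?_ (by fun_prop) (fun t ht => by
        have := Real.sqrt_pos.2 ht.1
        positivity)
      exact (c1.comp csq.continuousOn (fun t (ht : t ∈ Ioc (0:ℝ) 1) => mem' t ht.2)).clm_apply
        continuousOn_const
    have c3 := (c2 1 ⟨one_pos, le_rfl⟩).tendsto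
    have z : fderivWithin ℝ u (closedBall 0 1) (√1 • e) e / (2 * √1) = 0 := by
      have := hu.bdry_deriv e he
      simp [this]
    rw [z] at c3
    have c4 : Tendsto (fun t : ℝ => fderivWithin ℝ u (closedBall 0 1) (√t • e) e / (2 * √t))
        (nhdsWithin 1 (Iio 1)) (nhds 0) := by
      refine c3.mono_left ?_
      rw [← nhdsWithin_Ioo_eq_nhdsLT (one_pos : (0:ℝ) < 1)]
      exact nhdsWithin_mono _ Ioo_subset_Ioc_self
    refine c4.congr' ?_
    filter_upwards [self_mem_nhdsWithin] with t ht
    rw [fderivWithin_of_mem_nhds]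
    exact mem_of_superset (isOpen_ball.mem_nhds (mem t ht)) ball_subset_closedBall
  · intro t ht
    exact ⟨hu.pos _ (mem t ht.2), hu.lt_one _ (mem t ht.2)⟩

lemma IsClassicalSolution.comp_isometry {N : ℕ} {lam : ℝ} {u : EuclideanSpace ℝ (Fin N) → ℝ}
    (hu : IsClassicalSolution N lam u)
    (A : EuclideanSpace ℝ (Fin N) ≃ₗᵢ[ℝ] EuclideanSpace ℝ (Fin N)) :
    IsClassicalSolution N lam (u ∘ A) := by
  have memA : ∀ x ∈ ball (0 : EuclideanSpace ℝ (Fin N)) 1,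
      A x ∈ ball (0 : EuclideanSpace ℝ (Fin N)) 1 := fun x hx => by
    simpa [mem_ball_zero_iff] using hx
  refine ⟨?_, fun x hx => hu.pos _ (memA x hx), fun x hx => hu.lt_one _ (memA x hx), ?_,
    fun x hx => hu.bdry _ (by simpa using hx), ?_⟩
  · exact hu.contDiffOn.comp A.contDiff.contDiffOn (fun x hx => by
      simpa [mem_closedBall_zero_iff] using hx)
  · intro x hx
    rw [Function.comp_apply, ← hu.eqn _ (memA x hx)]
    unfold biharm
    rw [← lap_comp_isometry A (contDiffAt_lap (hu.contDiffAt _ (memA x hx)))]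
    apply lap_congr
    filter_upwards [isOpen_ball.mem_nhds hx] with z hz
    exact lap_comp_isometry A ((hu.contDiffAt _ (memA z hz)).of_le (by norm_num))
  · intro x hx
    have h1 := A.toContinuousLinearEquiv.comp_right_fderivWithin (f := u)
      (s := closedBall 0 1) (x := x) (by
        have : (A.toContinuousLinearEquiv ⁻¹' closedBall (0 : EuclideanSpace ℝ (Fin N)) 1)
          = closedBall 0 1 := by ext; simp
        rw [this]
        exact uniqueDiff_cball N x (by simp [hx]))
    have h2 : (A.toContinuousLinearEquiv ⁻¹' closedBall (0 : EuclideanSpace ℝ (Fin N)) 1)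
          = closedBall 0 1 := by ext; simp
    rw [h2] at h1
    change fderivWithin ℝ (u ∘ A) (closedBall 0 1) x = _ at h1
    rw [h1]
    exact hu.bdry_deriv (A x) (by simpa using hx)

lemma radial_of_minimal {N : ℕ} {lam : ℝ} {u : EuclideanSpace ℝ (Fin N) → ℝ}
    (hu : IsClassicalSolution N lam u) (hm : ∀ v, IsClassicalSolution N lam v →
          ∀ x ∈ ball (0 : EuclideanSpace ℝ (Fin N)) 1, u x ≤ v x) : RadialOn u := by
  intro x hx y hxy
  have hy : y ∈ ball (0 : EuclideanSpace ℝ (Fin N)) 1 := by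
    simpa [mem_ball_zero_iff, ← hxy] using hx
  obtain ⟨A, hA⟩ := exists_isometry hxy
  obtain ⟨B, hB⟩ := exists_isometry hxy.symm
  have h1 := hm _ (hu.comp_isometry A) x hx
  have h2 := hm _ (hu.comp_isometry B) y hy
  simp only [Function.comp_apply, hA, hB] at h1 h2
  exact le_antisymm h1 h2

/-! ### Boundedness of the set of voltages -/

lemma contDiff_lap {N : ℕ} {u : EuclideanSpace ℝ (Fin N) → ℝ} (h : ContDiff ℝ 4 u) :
    ContDiff ℝ 2 (lap u) :=
  contDiff_iff_contDiffAt.2 fun x => contDiffAt_lap h.contDiffAt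

lemma hcs_lap {N : ℕ} {u : EuclideanSpace ℝ (Fin N) → ℝ} (h : HasCompactSupport u) :
    HasCompactSupport (lap u) := by
  have : ∀ s : Finset (Fin N), HasCompactSupport (fun x => ∑ i ∈ s,
      fderiv ℝ (fun y => fderiv ℝ u y (EuclideanSpace.single i 1)) x
        (EuclideanSpace.single i 1)) := by
    classical
    intro s
    induction s using Finset.induction_on with
    | empty => simp only [Finset.sum_empty]; exact HasCompactSupport.zero
    | insert i s hi ih =>
      simp only [Finset.sum_insert hi]
      exact ((h.fderiv_apply ℝ _).fderiv_apply ℝ _).add ih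
  exact this Finset.univ

lemma continuous_fderiv_apply {N : ℕ} {u : EuclideanSpace ℝ (Fin N) → ℝ} (h : ContDiff ℝ 1 u)
    (v : EuclideanSpace ℝ (Fin N)) : Continuous (fun x => fderiv ℝ u x v) :=
  (h.continuous_fderiv one_ne_zero).clm_apply continuous_const

lemma contDiff_fderiv_apply' {N : ℕ} {u : EuclideanSpace ℝ (Fin N) → ℝ} (h : ContDiff ℝ 2 u)
    (v : EuclideanSpace ℝ (Fin N)) : ContDiff ℝ 1 (fun x => fderiv ℝ u x v) :=
  (h.fderiv_right (m := 1) (by norm_num)).clm_apply contDiff_const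

lemma continuous_lap {N : ℕ} {u : EuclideanSpace ℝ (Fin N) → ℝ} (h : ContDiff ℝ 2 u) :
    Continuous (lap u) := by
  unfold lap
  exact continuous_finsetSum _ fun i _ => continuous_fderiv_apply (contDiff_fderiv_apply' h _) _

lemma ibp1 {N : ℕ} {f g : EuclideanSpace ℝ (Fin N) → ℝ} (hf : ContDiff ℝ 1 f) (hg : ContDiff ℝ 1 g)
    (cf : HasCompactSupport f) (v : EuclideanSpace ℝ (Fin N)) :
    ∫ x, f x * fderiv ℝ g x v = - ∫ x, fderiv ℝ f x v * g x := by
  apply integral_mul_fderiv_eq_neg_fderiv_mul_of_integrable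
  · exact ((continuous_fderiv_apply hf v).mul hg.continuous).integrable_of_hasCompactSupport
      ((cf.fderiv_apply ℝ v).mul_right)
  · exact (hf.continuous.mul (continuous_fderiv_apply hg v)).integrable_of_hasCompactSupport
      cf.mul_right
  · exact (hf.continuous.mul hg.continuous).integrable_of_hasCompactSupport cf.mul_right
  · exact fun x _ => (hf.differentiable one_ne_zero) x
  · exact fun x _ => (hg.differentiable one_ne_zero) x

lemma ibp_lap {N : ℕ} {f g : EuclideanSpace ℝ (Fin N) → ℝ} (hf : ContDiff ℝ 2 f)
    (hg : ContDiff ℝ 2 g) (cf : HasCompactSupport f) :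
    ∫ x, f x * lap g x = ∫ x, lap f x * g x := by
  have f1 : ContDiff ℝ 1 f := hf.of_le (by norm_num)
  have g1 : ContDiff ℝ 1 g := hg.of_le (by norm_num)
  unfold lap
  simp only [Finset.mul_sum, Finset.sum_mul]
  rw [integral_finsetSum, integral_finsetSum]
  · refine Finset.sum_congr rfl fun i _ => ?_
    rw [ibp1 f1 (contDiff_fderiv_apply' hg _) cf,
      ibp1 (contDiff_fderiv_apply' hf _) g1 (cf.fderiv_apply ℝ _), neg_neg]
  · intro i _
    exact ((continuous_fderiv_apply (contDiff_fderiv_apply' hf _) _).mul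
      hg.continuous).integrable_of_hasCompactSupport
      (((cf.fderiv_apply ℝ _).fderiv_apply ℝ _).mul_right)
  · intro i _
    exact (hf.continuous.mul (continuous_fderiv_apply (contDiff_fderiv_apply' hg _) _)
      ).integrable_of_hasCompactSupport cf.mul_right

lemma solSet_bdd (N : ℕ) : BddAbove (solSet N) := by
  let b : ContDiffBump (0 : EuclideanSpace ℝ (Fin N)) := ⟨1/4, 1/2, by norm_num, by norm_num⟩
  let c : ContDiffBump (0 : EuclideanSpace ℝ (Fin N)) := ⟨3/5, 4/5, by norm_num, by norm_num⟩
  have bI : 0 < ∫ x, b x := b.integral_pos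
  have bC : ContDiff ℝ 4 (b : EuclideanSpace ℝ (Fin N) → ℝ) := b.contDiff
  have cC : ContDiff ℝ 4 (c : EuclideanSpace ℝ (Fin N) → ℝ) := c.contDiff
  have two4 : (2 : WithTop ℕ∞) ≤ 4 := by norm_num
  refine ⟨(∫ x, |lap (lap b) x|) / ∫ x, b x, ?_⟩
  rintro lam ⟨hl, u, hu⟩
  rw [le_div_iff₀ bI]
  set w : EuclideanSpace ℝ (Fin N) → ℝ := fun x => c x * u x with hw
  have wC : ContDiff ℝ 4 w := by
    rw [contDiff_iff_contDiffAt]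
    intro x
    by_cases hx : x ∈ ball (0 : EuclideanSpace ℝ (Fin N)) 1
    · exact cC.contDiffAt.mul (hu.contDiffAt x hx)
    · have : w =ᶠ[nhds x] fun _ => 0 := by
        have : (tsupport c)ᶜ ∈ nhds x := by
          refine (isClosed_tsupport _).isOpen_compl.mem_nhds ?_
          rw [mem_compl_iff, c.tsupport_eq]
          intro h
          apply hx
          exact closedBall_subset_ball (show (4/5:ℝ) < 1 by norm_num) h
        filter_upwards [this] with y hy
        simp only [hw, image_eq_zero_of_notMem_tsupport hy, zero_mul]
      exact contDiffAt_const.congr_of_eventuallyEq this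
  have weq : ∀ x ∈ ball (0 : EuclideanSpace ℝ (Fin N)) (3/5), w =ᶠ[nhds x] u := by
    intro x hx
    filter_upwards [c.eventuallyEq_one_of_mem_ball (x := x) hx] with y hy
    simp only [hw, hy, Pi.one_apply, one_mul]
  have lweq : ∀ x ∈ ball (0 : EuclideanSpace ℝ (Fin N)) (3/5), lap (lap w) x = biharm u x := by
    intro x hx
    apply lap_congr
    filter_upwards [isOpen_ball.mem_nhds hx] with y hy
    exact lap_congr (weq y hy)
  have wb : ∀ x, |w x| ≤ 1 := by
    intro x
    by_cases hx : x ∈ ball (0 : EuclideanSpace ℝ (Fin N)) 1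
    · rw [hw]; simp only [abs_mul]
      rw [abs_of_nonneg (c.nonneg' x), abs_of_pos (hu.pos x hx)]
      exact mul_le_one₀ c.le_one (hu.pos x hx).le (hu.lt_one x hx).le
    · have : c x = 0 := c.zero_of_le_dist (by
        simp only [mem_ball, not_lt] at hx
        exact (show (4/5:ℝ) ≤ 1 by norm_num).trans hx)
      simp [hw, this]
  have key : ∫ x, b x * lap (lap w) x = ∫ x, lap (lap b) x * w x := by
    rw [ibp_lap (bC.of_le two4) (contDiff_lap wC) b.hasCompactSupport,
      ibp_lap (contDiff_lap bC) (wC.of_le two4) (hcs_lap b.hasCompactSupport)]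
  have bi : Integrable (b : EuclideanSpace ℝ (Fin N) → ℝ) :=
    b.continuous.integrable_of_hasCompactSupport b.hasCompactSupport
  calc lam * ∫ x, b x = ∫ x, lam * b x := (integral_const_mul _ _).symm
    _ ≤ ∫ x, b x * lap (lap w) x := by
      apply integral_mono (bi.const_mul lam)
      · exact (b.continuous.mul (continuous_lap (contDiff_lap wC))).integrable_of_hasCompactSupport
          b.hasCompactSupport.mul_right
      · intro x
        by_cases hx : x ∈ ball (0 : EuclideanSpace ℝ (Fin N)) (3/5)
        · have hx1 : x ∈ ball (0 : EuclideanSpace ℝ (Fin N)) 1 :=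
            ball_subset_ball (by norm_num) hx
          change lam * b x ≤ b x * lap (lap w) x
          rw [lweq x hx, hu.eqn x hx1, mul_comm]
          have h1 := hu.pos x hx1
          have h2 := hu.lt_one x hx1
          refine mul_le_mul_of_nonneg_left ?_ (b.nonneg' x)
          rw [le_div_iff₀ (by apply pow_pos; linarith)]
          have : (1 - u x)^2 ≤ 1 := by nlinarith
          nlinarith
        · have : b x = 0 := b.zero_of_le_dist (by
            simp only [mem_ball, not_lt] at hx
            exact (show (1/2:ℝ) ≤ 3/5 by norm_num).trans hx)
          simp [this]
    _ = ∫ x, lap (lap b) x * w x := key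
    _ ≤ ∫ x, |lap (lap b) x| := by
      have cc := continuous_lap (contDiff_lap bC)
      have hc := hcs_lap (hcs_lap b.hasCompactSupport)
      apply integral_mono
      · exact (cc.mul wC.continuous).integrable_of_hasCompactSupport hc.mul_right
      · exact (cc.integrable_of_hasCompactSupport hc).abs
      · intro x
        change lap (lap b) x * w x ≤ |lap (lap b) x|
        calc _ ≤ |lap (lap b) x * w x| := le_abs_self _
          _ = |lap (lap b) x| * |w x| := abs_mul _ _
          _ ≤ _ := mul_le_of_le_one_right (abs_nonneg _) (wb x)

/-! ### Power series with polynomially bounded coefficients -/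

/-- The sum of the power series. -/
noncomputable def Ser (a : ℕ → ℝ) (t : ℝ) : ℝ := ∑' k, a k * t ^ k

/-- polynomially bounded coefficients -/
def PB (a : ℕ → ℝ) : Prop := ∃ M : ℝ, ∃ n : ℕ, 0 ≤ M ∧ ∀ k, |a k| ≤ M * ((k:ℝ) + 1) ^ n

/-- coefficients of the derivative -/
def Dc (a : ℕ → ℝ) : ℕ → ℝ := fun k => ((k:ℝ) + 1) * a (k + 1)

lemma PB.Dc {a : ℕ → ℝ} (h : PB a) : PB (Dc a) := by
  obtain ⟨M, n, hM, h⟩ := h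
  refine ⟨M * 2 ^ n, n + 1, by positivity, fun k => ?_⟩
  unfold _root_.Dc
  rw [abs_mul, abs_of_pos (by positivity : (0:ℝ) < k + 1)]
  have h1 := h (k + 1)
  have h2 : ((k + 1 : ℕ) : ℝ) + 1 ≤ 2 * (k + 1) := by push_cast; linarith [Nat.cast_nonneg (α := ℝ) k]
  have h3 : (((k + 1 : ℕ) : ℝ) + 1) ^ n ≤ (2 * ((k:ℝ) + 1)) ^ n := by gcongr
  calc ((k:ℝ) + 1) * |a (k + 1)| ≤ (k + 1) * (M * (2 * ((k:ℝ) + 1)) ^ n) := by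
        refine mul_le_mul_of_nonneg_left (h1.trans ?_) (by positivity)
        exact mul_le_mul_of_nonneg_left h3 hM
    _ = _ := by rw [mul_pow]; ring

lemma PB.summable_norm {a : ℕ → ℝ} (h : PB a) {t : ℝ} (ht : |t| < 1) :
    Summable (fun k => ‖a k * t ^ k‖) := by
  obtain ⟨M, n, hM, h⟩ := h
  have h0 : Summable (fun k : ℕ => ((k:ℝ)) ^ n * |t| ^ k) :=
    summable_pow_mul_geometric_of_norm_lt_one n (by simpa using ht)
  have h1 : Summable (fun k : ℕ => ((k:ℝ)) ^ (n) * |t| ^ k * (M * 2 ^ n)) := h0.mul_right _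
  have h2 : Summable (fun k : ℕ => |t| ^ k * (M * 2 ^ n)) :=
    (summable_geometric_of_lt_one (abs_nonneg t) ht).mul_right _
  refine Summable.of_nonneg_of_le (fun k => norm_nonneg _) (fun k => ?_) (h1.add h2)
  rw [norm_mul, norm_pow, Real.norm_eq_abs, Real.norm_eq_abs]
  have h3 : ((k:ℝ) + 1) ^ n ≤ 2 ^ n * ((k:ℝ) ^ n + 1) := by
    rcases Nat.eq_zero_or_pos k with rfl | hk
    · simp only [Nat.cast_zero, zero_add, one_pow]
      have : (1:ℝ) ≤ 2 ^ n := one_le_pow₀ (by norm_num)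
      have : (0:ℝ) ≤ 0 ^ n := by positivity
      nlinarith
    · have : (1:ℝ) ≤ k := by exact_mod_cast hk
      calc ((k:ℝ) + 1) ^ n ≤ (2 * (k:ℝ)) ^ n := by gcongr; linarith
        _ = 2 ^ n * (k:ℝ) ^ n := mul_pow _ _ _
        _ ≤ _ := by gcongr; linarith
  calc |a k| * |t| ^ k ≤ M * (2 ^ n * ((k:ℝ) ^ n + 1)) * |t| ^ k := by
        gcongr
        exact (h k).trans (mul_le_mul_of_nonneg_left h3 hM)
    _ = _ := by ring

lemma PB.summable {a : ℕ → ℝ} (h : PB a) {t : ℝ} (ht : |t| < 1) :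
    Summable (fun k => a k * t ^ k) := (h.summable_norm ht).of_norm

lemma PB.hasDerivAt {a : ℕ → ℝ} (h : PB a) {t : ℝ} (ht : |t| < 1) :
    HasDerivAt (Ser a) (Ser (_root_.Dc a) t) t := by
  obtain ⟨r, hr, hr1⟩ := exists_between ht
  have r0 : 0 ≤ r := (abs_nonneg t).trans hr.le
  have hs : Summable (fun k : ℕ => |a k| * (k * r ^ (k - 1))) := by
    rw [← summable_nat_add_iff 1]
    refine ((h.Dc).summable_norm (t := r) (by rwa [abs_of_nonneg r0])).congr fun k => ?_
    unfold _root_.Dc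
    rw [norm_mul, norm_mul, norm_pow, Real.norm_of_nonneg r0, Real.norm_eq_abs, Real.norm_eq_abs,
      abs_of_pos (by positivity : (0:ℝ) < k + 1)]
    simp only [Nat.add_sub_cancel]
    push_cast
    ring
  have key := hasDerivAt_tsum_of_isPreconnected (g := fun k y => a k * y ^ k)
    (g' := fun k y => a k * (k * y ^ (k - 1))) (t := Ioo (-r) r) (y₀ := 0) (y := t) hs isOpen_Ioo
    (isPreconnected_Ioo)
    (fun k y _ => (hasDerivAt_pow k y).const_mul (a k))
    (fun k y hy => by
      rw [norm_mul, norm_mul, norm_pow, Real.norm_eq_abs, Real.norm_eq_abs, Real.norm_eq_abs,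
        Nat.abs_cast]
      have : |y| ≤ r := abs_le.2 ⟨hy.1.le, hy.2.le⟩
      gcongr)
    (by have := (abs_nonneg t).trans_lt hr; constructor <;> linarith)
    (h.summable (by simp))
    (abs_lt.1 hr)
  refine key.congr_deriv ?_
  rw [Summable.tsum_eq_zero_add]
  · simp only [Nat.cast_zero, zero_mul, mul_zero, zero_add, Nat.add_sub_cancel]
    unfold Ser _root_.Dc
    refine tsum_congr fun k => ?_
    push_cast; ring
  · refine Summable.of_norm_bounded hs fun k => ?_
    rw [norm_mul, norm_mul, norm_pow, Real.norm_eq_abs, Real.norm_eq_abs, Real.norm_eq_abs,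
        Nat.abs_cast]
    gcongr

lemma PB.contDiffOn (n : ℕ) : ∀ {a : ℕ → ℝ}, PB a → ContDiffOn ℝ n (Ser a) (Ioo (-1) 1) := by
  induction n with
  | zero =>
    intro a h
    rw [Nat.cast_zero, contDiffOn_zero]
    exact fun t ht => (h.hasDerivAt (abs_lt.2 ht)).continuousAt.continuousWithinAt
  | succ n ih =>
    intro a h
    rw [Nat.cast_add, Nat.cast_one, contDiffOn_succ_iff_deriv_of_isOpen isOpen_Ioo]
    refine ⟨fun t ht => (h.hasDerivAt (abs_lt.2 ht)).differentiableAt.differentiableWithinAt,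
      fun h => absurd h (by simp), ?_⟩
    exact (ih h.Dc).congr fun t ht => (h.hasDerivAt (abs_lt.2 ht)).deriv

/-- coefficients of `4 t f'' + 2 N f'`. -/
def Lc (N : ℕ) (a : ℕ → ℝ) : ℕ → ℝ := fun k => 2 * ((k:ℝ) + 1) * (2 * k + N) * a (k + 1)

lemma Ser_L {N : ℕ} {a : ℕ → ℝ} (h : PB a) {t : ℝ} (ht : |t| < 1) :
    4 * t * Ser (Dc (Dc a)) t + 2 * N * Ser (Dc a) t = Ser (Lc N a) t := by
  have h1 := h.Dc.summable ht
  have h2 := h.Dc.Dc.summable ht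
  have e : t * Ser (Dc (Dc a)) t = ∑' k : ℕ, (k:ℝ) * (Dc a k) * t ^ k := by
    have hs : Summable (fun k : ℕ => (k:ℝ) * (Dc a k) * t ^ k) := by
      rw [← summable_nat_add_iff 1]
      refine (h2.mul_left t).congr fun k => ?_
      unfold Dc; push_cast; ring
    rw [hs.tsum_eq_zero_add]
    simp only [Nat.cast_zero, zero_mul, zero_add]
    unfold Ser
    rw [← tsum_mul_left]
    refine tsum_congr fun k => ?_
    unfold Dc; push_cast; ring
  have hs : Summable (fun k : ℕ => (k:ℝ) * (Dc a k) * t ^ k) := by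
    rw [← summable_nat_add_iff 1]
    refine (h2.mul_left t).congr fun k => ?_
    unfold Dc; push_cast; ring
  rw [mul_assoc, e]
  unfold Ser
  rw [← tsum_mul_left, ← tsum_mul_left, ← Summable.tsum_add (hs.mul_left _) (h1.mul_left _)]
  refine tsum_congr fun k => ?_
  unfold Lc Dc; ring

lemma PB.Lc {N : ℕ} {a : ℕ → ℝ} (h : PB a) : PB (Lc N a) := by
  obtain ⟨M, n, hM, h⟩ := h.Dc
  refine ⟨M * (2 * (N + 2)), n + 1, by positivity, fun k => ?_⟩
  have e : _root_.Lc N a k = 2 * (2 * k + N) * _root_.Dc a k := by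
    unfold _root_.Lc _root_.Dc; ring
  rw [e, abs_mul, abs_of_nonneg (by positivity)]
  calc 2 * (2 * (k:ℝ) + N) * |_root_.Dc a k| ≤ 2 * ((N + 2) * (k + 1)) * (M * (k + 1) ^ n) := by
        gcongr
        · nlinarith [Nat.cast_nonneg (α := ℝ) k, Nat.cast_nonneg (α := ℝ) N]
        · exact h k
    _ = _ := by ring

lemma lap_Ser {N : ℕ} {a : ℕ → ℝ} (h : PB a) (A B s : ℝ) {x : EuclideanSpace ℝ (Fin N)}
    (hx : |s * ‖x‖ ^ 2| < 1) :
    lap (fun y => A + B * Ser a (s * ‖y‖ ^ 2)) x = 0 + B * s * Ser (Lc N a) (s * ‖x‖ ^ 2) := by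
  have hd : ∀ {b : ℕ → ℝ}, PB b → ∀ t : ℝ, |s * t| < 1 →
      HasDerivAt (fun t => Ser b (s * t)) (Ser (Dc b) (s * t) * s) t := by
    intro b hb t ht
    have h1 : HasDerivAt (fun t : ℝ => s * t) s t := by
      simpa using (hasDerivAt_id t).const_mul s
    exact (hb.hasDerivAt ht).comp t h1
  have ev : ∀ᶠ t in nhds (‖x‖ ^ 2), |s * t| < 1 := by
    have : Continuous (fun t : ℝ => |s * t|) := by fun_prop
    exact this.continuousAt.eventually_lt continuousAt_const hx
  have := lap_normSq (N := N) (x := x) (g := fun t => A + B * Ser a (s * t))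
    (g1 := fun t => B * (Ser (Dc a) (s * t) * s))
    (g2 := B * (Ser (Dc (Dc a)) (s * ‖x‖ ^ 2) * s * s))
    (by
      filter_upwards [ev] with t ht
      exact ((hd h t ht).const_mul B).const_add A)
    (((hd h.Dc _ hx).mul_const s).const_mul B)
  rw [this, ← Ser_L h hx]; ring

/-! ### An explicit solution by power series -/

/-- `c_k` -/
def cc (N : ℕ) (k : ℕ) : ℝ :=
  4 * ((k:ℝ) + 2) * (k + 1) * (2 * k + N + 2) * (2 * k + N)

lemma cc_ge {N : ℕ} (hN : 5 ≤ N) (k : ℕ) : 140 * (((k:ℝ) + 1) * (k + 2)) ≤ cc N k := by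
  have h : (5:ℝ) ≤ N := by exact_mod_cast hN
  have hk : (0:ℝ) ≤ k := Nat.cast_nonneg k
  unfold cc
  have : (35:ℝ) ≤ (2 * k + N + 2) * (2 * k + N) := by nlinarith
  nlinarith [mul_le_mul_of_nonneg_left this (by positivity : 0 ≤ 4 * ((k:ℝ) + 2) * (k + 1))]

lemma cc_pos {N : ℕ} (hN : 5 ≤ N) (k : ℕ) : 0 < cc N k :=
  lt_of_lt_of_le (by positivity) (cc_ge hN k)

/-- coefficients of `p = v⁻²`. -/
noncomputable def pc (N : ℕ) (α : ℝ) : ℕ → ℝ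
  | 0 => 1
  | k + 1 => -(1 / ((k:ℝ) + 1)) * ∑ j : Fin (k + 1), ((k:ℝ) + 2 + (j.1 : ℝ)) *
      (if j.1 = 0 then α else - pc N α (j.1 - 1) / cc N (j.1 - 1)) * pc N α (k - j.1)
  termination_by k => k
  decreasing_by
    · have := j.2; omega
    · omega

/-- coefficients of `v` -/
noncomputable def vc (N : ℕ) (α : ℝ) : ℕ → ℝ
  | 0 => 1
  | 1 => α
  | k + 2 => - pc N α k / cc N k

lemma pc_zero (N : ℕ) (α : ℝ) : pc N α 0 = 1 := by rw [pc]

lemma pc_succ (N : ℕ) (α : ℝ) (k : ℕ) : ((k:ℝ) + 1) * pc N α (k + 1) =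
    - ∑ j ∈ Finset.range (k + 1), ((k:ℝ) + 2 + (j : ℝ)) * vc N α (j + 1) * pc N α (k - j) := by
  rw [pc, Finset.sum_range]
  have : (k:ℝ) + 1 ≠ 0 := by positivity
  field_simp
  rw [← Finset.sum_neg_distrib, ← Finset.sum_neg_distrib]
  refine Finset.sum_congr rfl fun j _ => ?_
  rcases hj : j.1 with _ | i
  · simp [vc]
  · simp [vc]; ring

lemma tele (n : ℕ) : ∑ k ∈ Finset.range n, 1 / (((k:ℝ) + 1) * (k + 2)) = 1 - 1 / ((n:ℝ) + 1) := by
  induction n with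
  | zero => simp
  | succ n ih =>
    rw [Finset.sum_range_succ, ih]
    push_cast
    field_simp
    ring

lemma pc_bound {N : ℕ} (hN : 5 ≤ N) {α : ℝ} (h0 : 0 < α) (h1 : α ≤ 1/4) :
    ∀ k, |pc N α k| ≤ 1 := by
  intro k
  induction k using Nat.strong_induction_on with
  | _ k ih =>
    rcases k with _ | k
    · rw [pc_zero]; simp
    · have e := pc_succ N α k
      have hk : (0:ℝ) < (k:ℝ) + 1 := by positivity
      have S : ∑ j ∈ Finset.range (k + 1), |vc N α (j + 1)| ≤ 1/2 := by
        rw [Finset.sum_range_succ']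
        have : ∑ j ∈ Finset.range k, |vc N α (j + 1 + 1)| ≤
            ∑ j ∈ Finset.range k, 1 / (((j:ℝ) + 1) * (j + 2)) * (1 / 140) := by
          refine Finset.sum_le_sum fun j hj => ?_
          have hj' : j < k + 1 := by have := Finset.mem_range.1 hj; omega
          simp only [vc]
          rw [abs_div, abs_neg, abs_of_pos (cc_pos hN j)]
          calc |pc N α j| / cc N j ≤ 1 / (140 * (((j:ℝ) + 1) * (j + 2))) := by
                have := ih j hj'
                have := cc_ge hN j
                gcongr
            _ = _ := by field_simp
        rw [← Finset.sum_mul, tele] at this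
        have e2 : |vc N α (0 + 1)| = α := by simp [vc, abs_of_pos h0]
        rw [e2]
        have : 0 ≤ 1 / ((k:ℝ) + 1) := by positivity
        linarith
      have : ((k:ℝ) + 1) * |pc N α (k + 1)| ≤ ((k:ℝ) + 1) * 1 := by
        rw [← abs_of_pos hk, ← abs_mul, abs_of_pos hk, e, abs_neg]
        calc _ ≤ ∑ j ∈ Finset.range (k + 1),
                |((k:ℝ) + 2 + (j : ℝ)) * vc N α (j + 1) * pc N α (k - j)| :=
              Finset.abs_sum_le_sum_abs _ _
          _ ≤ ∑ j ∈ Finset.range (k + 1), (2 * ((k:ℝ) + 1)) * |vc N α (j + 1)| := by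
              refine Finset.sum_le_sum fun j hj => ?_
              have hj' : j < k + 1 := Finset.mem_range.1 hj
              have hjr : (j:ℝ) ≤ k := by exact_mod_cast Nat.lt_succ_iff.1 hj'
              rw [abs_mul, abs_mul, abs_of_pos (by positivity : (0:ℝ) < k + 2 + j)]
              calc _ ≤ (2 * ((k:ℝ) + 1)) * |vc N α (j + 1)| * 1 := by
                    have := ih (k - j) (by omega)
                    gcongr
                    linarith
                _ = _ := mul_one _
          _ ≤ _ := by rw [← Finset.mul_sum]; nlinarith
      exact le_of_mul_le_mul_left this hk

lemma PB_pc {N : ℕ} (hN : 5 ≤ N) {α : ℝ} (h0 : 0 < α) (h1 : α ≤ 1/4) : PB (pc N α) :=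
  ⟨1, 0, by norm_num, fun k => by simpa using pc_bound hN h0 h1 k⟩

lemma PB_vc {N : ℕ} (hN : 5 ≤ N) {α : ℝ} (h0 : 0 < α) (h1 : α ≤ 1/4) : PB (vc N α) := by
  refine ⟨1, 0, by norm_num, fun k => ?_⟩
  simp only [pow_zero, mul_one]
  rcases k with _ | _ | k
  · simp [vc]
  · simp only [vc]; rw [abs_of_pos h0]; linarith
  · simp only [vc]
    rw [abs_div, abs_neg, abs_of_pos (cc_pos hN k), div_le_one (cc_pos hN k)]
    have := pc_bound hN h0 h1 k
    have := cc_ge hN k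
    have hk : (0:ℝ) ≤ k := Nat.cast_nonneg k
    nlinarith

lemma Lc_Lc_vc {N : ℕ} (hN : 5 ≤ N) (α : ℝ) (k : ℕ) : Lc N (Lc N (vc N α)) k = - pc N α k := by
  have : Lc N (Lc N (vc N α)) k = cc N k * vc N α (k + 2) := by
    unfold Lc cc; push_cast; ring_nf
  rw [this]
  simp only [vc]
  have := cc_pos hN k
  field_simp

lemma cauchy_vp {N : ℕ} (α : ℝ) (n : ℕ) :
    ∑ k ∈ Finset.range (n + 1), vc N α k * Dc (pc N α) (n - k) +
      2 * ∑ k ∈ Finset.range (n + 1), Dc (vc N α) k * pc N α (n - k) = 0 := by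
  have e1 : ∑ k ∈ Finset.range (n + 1), vc N α k * Dc (pc N α) (n - k) =
      ∑ k ∈ Finset.range (n + 2), vc N α k * (((n:ℝ) + 1 - k) * pc N α (n + 1 - k)) := by
    rw [Finset.sum_range_succ _ (n + 1)]
    have : (n:ℝ) + 1 - ((n + 1 : ℕ) : ℝ) = 0 := by push_cast; ring
    rw [this, zero_mul, mul_zero, add_zero]
    refine Finset.sum_congr rfl fun k hk => ?_
    have hk' : k ≤ n := Nat.lt_succ_iff.1 (Finset.mem_range.1 hk)
    unfold Dc
    rw [Nat.cast_sub hk', Nat.sub_add_comm hk']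
    ring
  rw [e1, Finset.sum_range_succ']
  have e2 : vc N α 0 = 1 := by simp [vc]
  have e3 := pc_succ N α n
  rw [e2, Nat.cast_zero, sub_zero, Nat.sub_zero, one_mul, e3, Finset.mul_sum, add_right_comm,
    ← Finset.sum_add_distrib, ← sub_eq_add_neg, ← Finset.sum_sub_distrib]
  refine Finset.sum_eq_zero fun k _ => ?_
  unfold Dc
  rw [Nat.add_sub_add_right]
  push_cast
  ring

lemma Ser_mul {a b : ℕ → ℝ} (ha : PB a) (hb : PB b) {t : ℝ} (ht : |t| < 1) :
    HasSum (fun n => (∑ k ∈ Finset.range (n + 1), a k * b (n - k)) * t ^ n) (Ser a t * Ser b t) := by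
  have h1 := ha.summable_norm ht
  have h2 := hb.summable_norm ht
  have e : ∀ n, ∑ k ∈ Finset.range (n + 1), a k * t ^ k * (b (n - k) * t ^ (n - k)) =
      (∑ k ∈ Finset.range (n + 1), a k * b (n - k)) * t ^ n := by
    intro n
    rw [Finset.sum_mul]
    refine Finset.sum_congr rfl fun k hk => ?_
    have hk' : k ≤ n := Nat.lt_succ_iff.1 (Finset.mem_range.1 hk)
    rw [← Nat.add_sub_cancel' hk', pow_add, Nat.add_sub_cancel_left]; ring
  have h3 := tsum_mul_tsum_eq_tsum_sum_range_of_summable_norm h1 h2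
  have h4 := (summable_norm_sum_mul_range_of_summable_norm h1 h2).of_norm.hasSum
  rw [← h3] at h4
  simp only [e] at h4
  exact h4

lemma Ser_zero (a : ℕ → ℝ) : Ser a 0 = a 0 := by
  unfold Ser
  rw [tsum_eq_single 0]
  · simp
  · intro k hk; simp [hk]

lemma ode_vp {N : ℕ} (hN : 5 ≤ N) {α : ℝ} (h0 : 0 < α) (h1 : α ≤ 1/4) {t : ℝ} (ht : |t| < 1) :
    Ser (vc N α) t * Ser (Dc (pc N α)) t + 2 * (Ser (Dc (vc N α)) t * Ser (pc N α) t) = 0 := by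
  have hp := PB_pc hN h0 h1
  have hv := PB_vc hN h0 h1
  have := (Ser_mul hv hp.Dc ht).add ((Ser_mul hv.Dc hp ht).mul_left 2)
  refine this.unique ?_
  have e : ∀ n, (∑ k ∈ Finset.range (n + 1), vc N α k * Dc (pc N α) (n - k)) * t ^ n +
      2 * ((∑ k ∈ Finset.range (n + 1), Dc (vc N α) k * pc N α (n - k)) * t ^ n) = 0 := by
    intro n
    have := cauchy_vp (N := N) α n
    linear_combination t ^ n * this
  simp only [e]
  exact hasSum_zero

lemma p_eq {N : ℕ} (hN : 5 ≤ N) {α : ℝ} (h0 : 0 < α) (h1 : α ≤ 1/4) {t : ℝ} (ht : t ∈ Ioo (-1:ℝ) 1) :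
    Ser (pc N α) t * Ser (vc N α) t ^ 2 = 1 := by
  have hp := PB_pc hN h0 h1
  have hv := PB_vc hN h0 h1
  have hd : ∀ s ∈ Ioo (-1:ℝ) 1,
      HasDerivAt (fun t => Ser (pc N α) t * Ser (vc N α) t ^ 2) 0 s := by
    intro s hs
    have hs' := abs_lt.2 hs
    refine ((hp.hasDerivAt hs').mul ((hv.hasDerivAt hs').pow 2)).congr_deriv ?_
    have := ode_vp hN h0 h1 hs'
    simp only [Pi.pow_apply]
    push_cast
    linear_combination Ser (vc N α) s * this
  have := isOpen_Ioo.is_const_of_deriv_eq_zero (s := Ioo (-1:ℝ) 1) isPreconnected_Ioo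
    (fun s hs => (hd s hs).differentiableAt.differentiableWithinAt)
    (fun s hs => (hd s hs).deriv) ht (show (0:ℝ) ∈ Ioo (-1:ℝ) 1 by norm_num)
  rw [this, Ser_zero, Ser_zero, pc_zero]
  simp [vc]

lemma v_pos {N : ℕ} (hN : 5 ≤ N) {α : ℝ} (h0 : 0 < α) (h1 : α ≤ 1/4) {t : ℝ} (ht : t ∈ Ioo (-1:ℝ) 1) :
    0 < Ser (vc N α) t := by
  by_contra hneg
  push Not at hneg
  have hv := PB_vc hN h0 h1
  have hc : ContinuousOn (Ser (vc N α)) (Ioo (-1:ℝ) 1) := fun s hs =>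
    (hv.hasDerivAt (abs_lt.2 hs)).continuousAt.continuousWithinAt
  have h00 : (0:ℝ) ∈ Ioo (-1:ℝ) 1 := by norm_num
  have v0 : Ser (vc N α) 0 = 1 := by rw [Ser_zero]; simp [vc]
  obtain ⟨s, hs, e⟩ := isPreconnected_Ioo.intermediate_value ht h00 hc
    (show (0:ℝ) ∈ Icc _ _ from ⟨hneg, by rw [v0]; norm_num⟩)
  have := p_eq hN h0 h1 hs
  rw [e] at this
  norm_num at this

lemma v1_neg {N : ℕ} (hN : 5 ≤ N) {α : ℝ} (h0 : 0 < α) (h1 : α ≤ 1/4) (h2 : α ≤ 1 / (6 * cc N 0)) :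
    Ser (Dc (vc N α)) (1/4) < 0 := by
  have hv := PB_vc hN h0 h1
  have hs := hv.Dc.summable (t := 1/4) (by rw [abs_of_pos] <;> norm_num)
  have c0 := cc_pos hN 0
  unfold Ser
  rw [hs.tsum_eq_zero_add, ((summable_nat_add_iff 1).2 hs).tsum_eq_zero_add]
  have b : ∑' k, Dc (vc N α) (k + 1 + 1) * (1/4:ℝ) ^ (k + 1 + 1) ≤ 1 / (12 * cc N 0) := by
    have hg : HasSum (fun k : ℕ => 1 / (16 * cc N 0) * (1/4:ℝ) ^ k) (1 / (16 * cc N 0) * (1 - 1/4)⁻¹) :=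
      (hasSum_geometric_of_lt_one (by norm_num) (by norm_num)).mul_left _
    have : ∑' k, Dc (vc N α) (k + 1 + 1) * (1/4:ℝ) ^ (k + 1 + 1) ≤ 1 / (16 * cc N 0) * (1 - 1/4)⁻¹ := by
      rw [← hg.tsum_eq]
      refine Summable.tsum_le_tsum (fun k => ?_)
        ((summable_nat_add_iff 1).2 ((summable_nat_add_iff 1).2 hs)) hg.summable
      have e : 1 / (16 * cc N 0) * (1/4:ℝ) ^ k = 1 / cc N 0 * (1/4:ℝ) ^ (k + 1 + 1) := by
        rw [pow_succ, pow_succ]; field_simp; norm_num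
      rw [e]
      refine mul_le_mul_of_nonneg_right ?_ (by positivity)
      unfold Dc
      simp only [vc]
      have hp := (neg_le_abs _).trans (pc_bound hN h0 h1 (k + 1))
      have c1 := cc_pos hN (k + 1)
      rw [← mul_div_assoc, div_le_div_iff₀ c1 c0, one_mul]
      have : (((k + 1 + 1 : ℕ) : ℝ) + 1) * cc N 0 ≤ cc N (k + 1) := by
        have hN' : (5:ℝ) ≤ N := by exact_mod_cast hN
        unfold cc
        push_cast
        have hk : (0:ℝ) ≤ k := Nat.cast_nonneg k
        have A : ((0:ℝ) + N + 2) * (0 + N) ≤ (2 * (k + 1) + N + 2) * (2 * (k + 1) + N) := by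
          gcongr <;> nlinarith
        have B : 2 * (((0:ℝ) + N + 2) * (0 + N)) ≤
            (k + 1 + 1) * ((2 * (k + 1) + N + 2) * (2 * (k + 1) + N)) := by
          gcongr; linarith
        have := mul_le_mul_of_nonneg_left B (by positivity : (0:ℝ) ≤ 4 * (k + 3))
        nlinarith
      have q : (((k + 1 + 1 : ℕ) : ℝ) + 1) * -pc N α (k + 1) ≤ (((k + 1 + 1 : ℕ) : ℝ) + 1) * 1 := by
        gcongr
      nlinarith
    refine this.trans (le_of_eq ?_)
    field_simp; norm_num
  have e0 : Dc (vc N α) 0 = α := by unfold Dc; simp [vc]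
  have e1 : Dc (vc N α) (0 + 1) = - (2 / cc N 0) := by
    unfold Dc; simp only [vc, pc_zero]; push_cast; ring
  rw [e0, e1]
  have e2 : 1 / (12 * cc N 0) = 1/12 * (1 / cc N 0) := by field_simp
  have e3 : 1 / (6 * cc N 0) = 1/6 * (1 / cc N 0) := by field_simp
  have e4 : 2 / cc N 0 = 2 * (1 / cc N 0) := by field_simp
  have e5 : 0 < 1 / cc N 0 := by positivity
  rw [e2] at b
  rw [e3] at h2
  rw [e4]
  norm_num at *
  linarith

lemma solSet_nonempty {N : ℕ} (hN : 5 ≤ N) : (solSet N).Nonempty := by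
  have c0 := cc_pos hN 0
  have c0' := cc_ge hN 0
  set α : ℝ := 1 / (6 * cc N 0) with hα
  have h0 : 0 < α := by positivity
  have h1 : α ≤ 1/4 := by
    rw [hα]
    apply one_div_le_one_div_of_le (by norm_num)
    norm_num at c0'
    linarith
  have hp := PB_pc hN h0 h1
  have hv := PB_vc hN h0 h1
  set v := Ser (vc N α) with hvd
  set v1 := Ser (Dc (vc N α)) with hv1d
  have hder : ∀ t : ℝ, t ∈ Ioo (-1:ℝ) 1 → HasDerivAt v (v1 t) t := fun t ht =>
    hv.hasDerivAt (abs_lt.2 ht)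
  have hv1c : ∀ t : ℝ, t ∈ Ioo (-1:ℝ) 1 → ContinuousAt v1 t := fun t ht =>
    (hv.Dc.hasDerivAt (abs_lt.2 ht)).continuousAt
  have hneg : v1 (1/4) < 0 := v1_neg hN h0 h1 le_rfl
  have hzero : v1 0 = α := by rw [hv1d, Ser_zero]; unfold Dc; simp [vc]
  have sub : ∀ t ∈ Icc (0:ℝ) (1/4), t ∈ Ioo (-1:ℝ) 1 := fun t ht =>
    ⟨by linarith [ht.1], by linarith [ht.2]⟩
  have hcO : ContinuousOn v1 (Icc 0 (1/4)) := fun t ht => (hv1c t (sub t ht)).continuousWithinAt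
  have hK : IsCompact (Icc (0:ℝ) (1/4) ∩ v1 ⁻¹' Iic 0) :=
    isCompact_Icc.of_isClosed_subset (hcO.preimage_isClosed_of_isClosed isClosed_Icc isClosed_Iic)
      inter_subset_left
  obtain ⟨s, ⟨⟨hs, hs0⟩, hmin⟩⟩ := hK.exists_isLeast
    ⟨1/4, ⟨by norm_num, hneg.le⟩⟩
  have hs0 : v1 s ≤ 0 := hs0
  have spos : 0 < s := by
    rcases hs.1.eq_or_lt with e | e
    · rw [← e, hzero] at hs0; linarith
    · exact e
  have s4 := hs.2
  have hlt : ∀ t ∈ Ico 0 s, 0 < v1 t := by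
    intro t ht
    by_contra hn
    push Not at hn
    have := hmin ⟨⟨ht.1, by linarith [ht.2]⟩, hn⟩
    linarith [ht.2]
  have hs1 : v1 s = 0 := by
    refine le_antisymm hs0 ?_
    have : Tendsto v1 (nhdsWithin s (Iio s)) (nhds (v1 s)) :=
      (hv1c s (sub s hs)).tendsto.mono_left nhdsWithin_le_nhds
    refine ge_of_tendsto this ?_
    filter_upwards [Ioo_mem_nhdsLT spos] with t ht
    exact (hlt t ⟨ht.1.le, ht.2⟩).le
  have hmono : StrictMonoOn v (Icc 0 s) := by
    apply strictMonoOn_of_deriv_pos (convex_Icc 0 s)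
    · exact fun t ht => (hder t (sub t ⟨ht.1, ht.2.trans s4⟩)).continuousAt.continuousWithinAt
    · intro t ht
      rw [interior_Icc] at ht
      rw [(hder t (sub t ⟨ht.1.le, ht.2.le.trans s4⟩)).deriv]
      exact hlt t ⟨ht.1.le, ht.2⟩
  have vpos : ∀ t ∈ Icc (0:ℝ) (1/4), 0 < v t := fun t ht => v_pos hN h0 h1 (sub t ht)
  set V := v s with hV
  have Vpos : 0 < V := vpos s hs
  have hmem : ∀ x : EuclideanSpace ℝ (Fin N), ‖x‖ ≤ 1 → s * ‖x‖ ^ 2 ∈ Icc (0:ℝ) (1/4) := by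
    intro x hx
    have : ‖x‖ ^ 2 ≤ 1 := pow_le_one₀ (norm_nonneg x) hx
    exact ⟨by positivity, by nlinarith⟩
  have hderu : ∀ x : EuclideanSpace ℝ (Fin N), ‖x‖ ≤ 1 →
      HasFDerivAt (fun y : EuclideanSpace ℝ (Fin N) => 1 + -(1/V) * v (s * ‖y‖ ^ 2))
        ((-(1/V) * (v1 (s * ‖x‖ ^ 2) * s)) • ((2:ℝ) • innerSL ℝ x)) x := by
    intro x hx
    refine hasFDerivAt_comp_normSq (g := fun t => 1 + -(1/V) * v (s * t)) ?_
    have e1 : HasDerivAt (fun t : ℝ => s * t) s (‖x‖ ^ 2) := by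
      simpa using (hasDerivAt_id (‖x‖ ^ 2)).const_mul s
    have e2 : HasDerivAt (fun t : ℝ => v (s * t)) (v1 (s * ‖x‖ ^ 2) * s) (‖x‖ ^ 2) :=
      (hder _ (sub _ (hmem x hx))).comp _ e1
    exact (e2.const_mul _).const_add 1
  refine ⟨s ^ 2 / V ^ 3, by positivity, fun x => 1 + -(1/V) * v (s * ‖x‖ ^ 2), ?_⟩
  refine ⟨?_, ?_, ?_, ?_, ?_, ?_⟩
  · intro x hx
    have hx1 : ‖x‖ ≤ 1 := by simpa using hx
    apply ContDiffAt.contDiffWithinAt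
    have c1 : ContDiffAt ℝ 4 v (s * ‖x‖ ^ 2) := by
      have := (PB.contDiffOn 4 hv).contDiffAt (isOpen_Ioo.mem_nhds (sub _ (hmem x hx1)))
      exact_mod_cast this
    have c2 : ContDiffAt ℝ 4 (fun y : EuclideanSpace ℝ (Fin N) => s * ‖y‖ ^ 2) x :=
      contDiffAt_const.mul (contDiff_norm_sq ℝ).contDiffAt
    have c3 : ContDiffAt ℝ 4 (fun y : EuclideanSpace ℝ (Fin N) => v (s * ‖y‖ ^ 2)) x :=
      ContDiffAt.comp (g := v) (f := fun y : EuclideanSpace ℝ (Fin N) => s * ‖y‖ ^ 2) x c1 c2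
    exact contDiffAt_const.add (contDiffAt_const.mul c3)
  · intro x hx
    have hx1 : ‖x‖ < 1 := by simpa using hx
    have m := hmem x hx1.le
    have l : s * ‖x‖ ^ 2 < s := by
      have : ‖x‖ ^ 2 < 1 := pow_lt_one₀ (norm_nonneg x) hx1 two_ne_zero
      nlinarith
    have := hmono ⟨m.1, l.le⟩ ⟨hs.1, le_rfl⟩ l
    have : v (s * ‖x‖ ^ 2) / V < 1 := (div_lt_one Vpos).2 this
    rw [neg_mul, one_div_mul_eq_div]
    linarith
  · intro x hx
    have hx1 : ‖x‖ < 1 := by simpa using hx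
    have := vpos _ (hmem x hx1.le)
    have : 0 < v (s * ‖x‖ ^ 2) / V := by positivity
    beta_reduce
    rw [neg_mul, one_div_mul_eq_div]
    linarith
  · intro x hx
    have hx1 : ‖x‖ < 1 := by simpa using hx
    have ab : ∀ y ∈ ball (0 : EuclideanSpace ℝ (Fin N)) 1, |s * ‖y‖ ^ 2| < 1 := by
      intro y hy
      have hy1 : ‖y‖ < 1 := by simpa using hy
      exact abs_lt.2 (sub _ (hmem y hy1.le))
    unfold biharm
    have e1 : lap (fun x : EuclideanSpace ℝ (Fin N) => 1 + -(1/V) * v (s * ‖x‖ ^ 2)) =ᶠ[nhds x]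
        fun y => 0 + -(1/V) * s * Ser (Lc N (vc N α)) (s * ‖y‖ ^ 2) := by
      filter_upwards [isOpen_ball.mem_nhds hx] with y hy
      exact lap_Ser hv 1 (-(1/V)) s (ab y hy)
    rw [lap_congr e1, lap_Ser hv.Lc 0 (-(1/V) * s) s (ab x hx)]
    have e2 : Ser (Lc N (Lc N (vc N α))) (s * ‖x‖ ^ 2) = - Ser (pc N α) (s * ‖x‖ ^ 2) := by
      unfold Ser
      rw [← tsum_neg]
      refine tsum_congr fun k => ?_
      rw [Lc_Lc_vc hN]; ring
    rw [e2]
    have e3 := p_eq hN h0 h1 (sub _ (hmem x hx1.le))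
    rw [← hvd] at e3
    have vp := vpos _ (hmem x hx1.le)
    have e4 : Ser (pc N α) (s * ‖x‖ ^ 2) = 1 / v (s * ‖x‖ ^ 2) ^ 2 := by
      field_simp; exact e3
    rw [e4]
    have e5 : 1 - (1 + -(1/V) * v (s * ‖x‖ ^ 2)) = v (s * ‖x‖ ^ 2) / V := by ring
    rw [e5]
    field_simp
    ring
  · intro x hx
    beta_reduce
    rw [hx, one_pow, mul_one, ← hV]
    field_simp
    ring
  · intro x hx
    have := (hderu x hx.le).hasFDerivWithinAt (s := closedBall (0 : EuclideanSpace ℝ (Fin N)) 1)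
    rw [this.fderivWithin (uniqueDiff_cball N x (by simp [hx]))]
    rw [hx, one_pow, mul_one, hs1]
    simp

/-! ### The final argument -/

lemma exists_good_T {N : ℕ} {l C : ℝ} {g g1 h h1 : ℝ → ℝ} (a : RadSol N l g g1 h h1)
    (hC : 0 < C) {t0 d : ℝ} (ht0 : t0 ∈ Ioo (0:ℝ) 1) (hd : 0 < d)
    (hd0 : d ≤ 1 - g t0 - C * t0 ^ ((2:ℝ)/3)) (hdC : C < 1 → d ≤ (1 - C) / 2) :
    ∃ T ∈ Ioo (0:ℝ) 1, d ≤ 1 - g T - C * T ^ ((2:ℝ)/3) ∧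
      -g1 T - C * ((2:ℝ)/3 * T ^ ((2:ℝ)/3 - 1)) ≤ 0 := by
  have hder : ∀ T ∈ Ioo (0:ℝ) 1, HasDerivAt (fun t : ℝ => 1 - g t - C * t ^ ((2:ℝ)/3))
      (-g1 T - C * ((2:ℝ)/3 * T ^ ((2:ℝ)/3 - 1))) T := by
    intro T hT
    have e1 := (a.s1.1 T hT).const_sub 1
    have e2 := (Real.hasDerivAt_rpow_const (x := T) (p := (2:ℝ)/3) (Or.inl hT.1.ne')).const_mul C
    exact e1.sub e2
  have hc : ContinuousOn (fun t : ℝ => 1 - g t - C * t ^ ((2:ℝ)/3)) (Icc 0 1) := by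
    refine (continuousOn_const.sub a.cont).sub (continuousOn_const.mul ?_)
    exact fun t _ => (Real.continuousAt_rpow_const t _ (Or.inr (by norm_num))).continuousWithinAt
  rcases lt_or_ge C 1 with hC1 | hC1
  · have dle := hdC hC1
    have one : (1:ℝ) ∈ Icc (0:ℝ) 1 := by norm_num
    have L1 : Tendsto (fun t : ℝ => 1 - g t - C * t ^ ((2:ℝ)/3)) (nhdsWithin 1 (Iio 1))
        (nhds (1 - C)) := by
      have := hc 1 one
      have h2 : Tendsto (fun t : ℝ => 1 - g t - C * t ^ ((2:ℝ)/3)) (nhdsWithin 1 (Iio 1))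
          (nhds (1 - g 1 - C * 1 ^ ((2:ℝ)/3))) := by
        refine this.tendsto.mono_left ?_
        rw [← nhdsWithin_Ioo_eq_nhdsLT (zero_lt_one' ℝ)]
        exact nhdsWithin_mono _ Ioo_subset_Icc_self
      simpa [a.one] using h2
    have L2 : Tendsto (fun t : ℝ => -g1 t - C * ((2:ℝ)/3 * t ^ ((2:ℝ)/3 - 1))) (nhdsWithin 1 (Iio 1))
        (nhds (-0 - C * ((2:ℝ)/3 * 1 ^ ((2:ℝ)/3 - 1)))) := by
      refine a.lim1.neg.sub ?_
      have : ContinuousAt (fun t : ℝ => C * ((2:ℝ)/3 * t ^ ((2:ℝ)/3 - 1))) 1 :=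
        continuousAt_const.mul (continuousAt_const.mul
          (Real.continuousAt_rpow_const 1 _ (Or.inl one_ne_zero)))
      exact this.tendsto.mono_left nhdsWithin_le_nhds
    rw [Real.one_rpow] at L2
    have ev1 := L1.eventually (lt_mem_nhds (show (1 - C) / 2 < 1 - C by linarith))
    have ev2 := L2.eventually (gt_mem_nhds (show -0 - C * ((2:ℝ)/3 * 1) < 0 by linarith))
    obtain ⟨T, h1, h2, h3⟩ := (ev1.and (ev2.and (Ioo_mem_nhdsLT (zero_lt_one' ℝ)))).exists
    exact ⟨T, h3, dle.trans h1.le, h2.le⟩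
  · obtain ⟨T, hT, hmax⟩ := isCompact_Icc.exists_isMaxOn (nonempty_Icc.2 ht0.2.le)
      (hc.mono (Icc_subset_Icc ht0.1.le le_rfl))
    have hge : d ≤ 1 - g T - C * T ^ ((2:ℝ)/3) := hd0.trans (hmax ⟨le_rfl, ht0.2.le⟩)
    have hT1 : T < 1 := by
      rcases hT.2.eq_or_lt with e | e
      · rw [e, a.one, Real.one_rpow] at hge; linarith
      · exact e
    have hTI : T ∈ Ioo (0:ℝ) 1 := ⟨ht0.1.trans_le hT.1, hT1⟩
    refine ⟨T, hTI, hge, ?_⟩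
    have hw := ((hder T hTI).hasDerivWithinAt (s := Ioi T))
    rw [hasDerivWithinAt_iff_tendsto_slope' (by simp)] at hw
    refine le_of_tendsto hw ?_
    filter_upwards [Ioo_mem_nhdsGT hT1] with t ht
    rw [slope_def_field]
    have := hmax (show t ∈ Icc t0 1 from ⟨hT.1.trans ht.1.le, ht.2.le⟩)
    exact div_nonpos_of_nonpos_of_nonneg (sub_nonpos.2 this) (by linarith [ht.1])

/-- for N ≥ 5, if u* is singular then 1 - u*(x) ≤ C₀|x|^{4/3} on B,
where C₀ = (λ*/λ̄_N)^{1/3}. -/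
theorem singular_extremal_lower_estimate (N : ℕ) (hN : 5 ≤ N)
    (uMin : ℝ → EuclideanSpace ℝ (Fin N) → ℝ)
    (hMin : ∀ lam : ℝ, 0 < lam → lam < sSup (solSet N) →
      IsClassicalSolution N lam (uMin lam) ∧
        ∀ v, IsClassicalSolution N lam v →
          ∀ x ∈ ball (0 : EuclideanSpace ℝ (Fin N)) 1, uMin lam x ≤ v x)
    (hMono : ∀ x ∈ ball (0 : EuclideanSpace ℝ (Fin N)) 1, ∀ l₁ l₂ : ℝ,
      0 < l₁ → l₁ ≤ l₂ → l₂ < sSup (solSet N) → uMin l₁ x ≤ uMin l₂ x)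
    (uStar : EuclideanSpace ℝ (Fin N) → ℝ)
    (hStar : ∀ x ∈ ball (0 : EuclideanSpace ℝ (Fin N)) 1,
      Tendsto (fun lam => uMin lam x) (nhdsWithin (sSup (solSet N)) (Iio (sSup (solSet N))))
        (nhds (uStar x)))
    :
    sSup (uStar '' ball (0 : EuclideanSpace ℝ (Fin N)) 1) = 1 →
      ∀ x ∈ ball (0 : EuclideanSpace ℝ (Fin N)) 1,
        1 - uStar x ≤ (sSup (solSet N) / lamBar N) ^ ((1 : ℝ) / 3) * ‖x‖ ^ ((4 : ℝ) / 3) := by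
  intro hsing
  have hbdd := solSet_bdd N
  set L := sSup (solSet N) with hL
  have Lpos : 0 < L := by
    obtain ⟨l, hl⟩ := solSet_nonempty hN
    exact hl.1.trans_le (le_csSup hbdd hl)
  have hN' : (5:ℝ) ≤ N := by exact_mod_cast hN
  have lbpos : 0 < lamBar N := by
    unfold lamBar
    have : 0 < (N:ℝ) - 2/3 := by linarith
    have : 0 < (N:ℝ) - 8/3 := by linarith
    positivity
  set C := (L / lamBar N) ^ ((1:ℝ)/3) with hCdef
  have hC : 0 < C := by positivity
  have hC3 : C ^ 3 * lamBar N = L := by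
    rw [hCdef, ← Real.rpow_natCast, ← Real.rpow_mul (by positivity)]
    norm_num
    field_simp
  have hne : (nhdsWithin L (Iio L)).NeBot := inferInstance
  have evpos : ∀ᶠ l in nhdsWithin L (Iio L), l ∈ Ioo 0 L := Ioo_mem_nhdsLT Lpos
  set e : EuclideanSpace ℝ (Fin N) := EuclideanSpace.single ⟨0, by omega⟩ 1 with he
  have he1 : ‖e‖ = 1 := by simp [he]
  have hrad : ∀ l ∈ Ioo 0 L, RadialOn (uMin l) := fun l hl =>
    radial_of_minimal (hMin l hl.1 hl.2).1 (hMin l hl.1 hl.2).2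
  have hsol : ∀ l ∈ Ioo 0 L, ∃ g1 h h1, RadSol N l (fun t => uMin l (√t • e)) g1 h h1 :=
    fun l hl => radSol_of_classical hN (hMin l hl.1 hl.2).1 (hrad l hl) he1
  have hval : ∀ l ∈ Ioo 0 L, ∀ x ∈ ball (0 : EuclideanSpace ℝ (Fin N)) 1,
      uMin l x = uMin l (√(‖x‖ ^ 2) • e) := by
    intro l hl x hx
    refine hrad l hl x hx _ ?_
    rw [norm_smul, he1, Real.sqrt_sq (norm_nonneg x)]
    simp
  have zmem : (0 : EuclideanSpace ℝ (Fin N)) ∈ ball (0 : EuclideanSpace ℝ (Fin N)) 1 := by simp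
  have hle0 : ∀ x ∈ ball (0 : EuclideanSpace ℝ (Fin N)) 1, uStar x ≤ uStar 0 := by
    intro x hx
    refine le_of_tendsto_of_tendsto (hStar x hx) (hStar 0 zmem) ?_
    filter_upwards [evpos] with l hl
    obtain ⟨g1, h, h1, hR⟩ := hsol l hl
    have hx1 : ‖x‖ < 1 := by simpa using hx
    have := hR.antitone hl.1 (show (0:ℝ) ∈ Icc (0:ℝ) 1 by norm_num)
      (show ‖x‖ ^ 2 ∈ Icc (0:ℝ) 1 from ⟨by positivity, pow_le_one₀ (norm_nonneg x) hx1.le⟩)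
      (by positivity)
    beta_reduce at this
    rw [← hval l hl x hx] at this
    simpa using this
  have hone : 1 ≤ uStar 0 := by
    rw [← hsing]
    refine csSup_le ⟨_, mem_image_of_mem _ zmem⟩ ?_
    rintro _ ⟨x, hx, rfl⟩
    exact hle0 x hx
  intro x hx
  have hx1 : ‖x‖ < 1 := by simpa using hx
  by_cases hx0 : x = 0
  · rw [hx0, norm_zero, Real.zero_rpow (by norm_num), mul_zero]
    linarith
  by_contra hcon
  push Not at hcon
  have hxp : 0 < ‖x‖ := norm_pos_iff.2 hx0
  set t0 := ‖x‖ ^ 2 with ht0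
  have ht0m : t0 ∈ Ioo (0:ℝ) 1 := ⟨by positivity, pow_lt_one₀ (norm_nonneg x) hx1 two_ne_zero⟩
  have hpow : ‖x‖ ^ ((4:ℝ)/3) = t0 ^ ((2:ℝ)/3) := by
    rw [ht0, ← Real.rpow_natCast, ← Real.rpow_mul (norm_nonneg x)]
    norm_num
  rw [hpow] at hcon
  set d0 := 1 - uStar x - C * t0 ^ ((2:ℝ)/3) with hd0
  have hd0p : 0 < d0 := by rw [hd0]; linarith
  obtain ⟨d, hdp, hdle, hdC⟩ : ∃ d, 0 < d ∧ d ≤ d0 ∧ (C < 1 → d ≤ (1 - C) / 2) := by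
    rcases lt_or_ge C 1 with h | h
    · exact ⟨min d0 ((1 - C) / 2), lt_min hd0p (by linarith), min_le_left _ _,
        fun _ => min_le_right _ _⟩
    · exact ⟨d0, hd0p, le_rfl, fun h' => absurd h' (not_lt.2 h)⟩
  have key : ∀ l ∈ Ioo 0 L, uMin l 0 ≤ 1 - d := by
    intro l hl
    obtain ⟨g1, h, h1, hR⟩ := hsol l hl
    have hl' : (l + L) / 2 ∈ Ioo 0 L := ⟨by linarith [hl.1], by linarith [hl.2]⟩
    obtain ⟨k1, m, m1, hR'⟩ := hsol _ hl'
    have hxle : uMin l x ≤ uStar x := by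
      refine ge_of_tendsto (hStar x hx) ?_
      filter_upwards [Ioo_mem_nhdsLT hl.2] with s hs
      exact hMono x hx l s hl.1 hs.1.le hs.2
    obtain ⟨T, hT, hTd, hTd1⟩ := exists_good_T hR hC ht0m hdp
      (by
        refine hdle.trans ?_
        beta_reduce
        rw [← hval l hl x hx, hd0]
        linarith) hdC
    have := main_comparison hN hR hR' hl.1 (by linarith [hl.2] : l < (l + L) / 2)
      (fun t ht => by
        refine hMono _ ?_ l _ hl.1 (by linarith [hl.2]) hl'.2
        rw [mem_ball_zero_iff, norm_smul, he1, mul_one, Real.norm_of_nonneg (Real.sqrt_nonneg t),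
          Real.sqrt_lt' one_pos]
        simpa using ht.2)
      hC (by rw [hC3]; exact hl.2.le) hT (hdp.le.trans hTd) hTd1
    have h0 := hTd.trans this
    simp only [Real.sqrt_zero, zero_smul] at h0
    linarith
  have : uStar 0 ≤ 1 - d := by
    refine le_of_tendsto (hStar 0 zmem) ?_
    filter_upwards [evpos] with l hl
    exact key l hl
  linarith
end

section
/- Let N ≥ 31. Then the pull-in voltage of (P)_λ on the unit ball satisfies λ* ≤ 27 λ̄_N = 24(N−2/3)(N−8/3). -/
open MeasureTheory Metric Set Filter

/-- abbreviation for the Euclidean space. -/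
abbrev EE (N : ℕ) := EuclideanSpace ℝ (Fin N)

lemma theta_lip (N k : ℕ) : ∃ D, LipschitzWith D
    (fun x : EE N => (1 - (min ‖x‖ 1) ^ 2) ^ (k + 1)) := by
  have h1 : LocallyLipschitz (fun t : ℝ => (1 - t ^ 2) ^ (k + 1)) := by
    apply ContDiff.locallyLipschitz (𝕂 := ℝ)
    fun_prop
  obtain ⟨K, hK⟩ := LocallyLipschitzOn.exists_lipschitzOnWith_of_compact (isCompact_Icc (a := (0:ℝ)) (b := 1)) h1.locallyLipschitzOn
  have h2 : LipschitzWith 1 (fun x : EE N => min ‖x‖ 1) := by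
    exact lipschitzWith_one_norm.min_const 1
  refine ⟨K * 1, ?_⟩
  rw [← lipschitzOnWith_univ] at h2 ⊢
  exact hK.comp h2 (fun x _ => ⟨le_min (norm_nonneg _) zero_le_one, min_le_right _ _⟩)

lemma theta_fderiv_in {N k : ℕ} {x : EE N} (hx : x ∈ ball (0 : EE N) 1) (i : Fin N) :
    lineDeriv ℝ (fun x : EE N => (1 - (min ‖x‖ 1) ^ 2) ^ (k + 1)) x (-EuclideanSpace.single i 1)
      = 2 * ((k : ℝ) + 1) * (x i * (1 - ‖x‖ ^ 2) ^ k) := by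
  have e : (fun x : EE N => (1 - (min ‖x‖ 1) ^ 2) ^ (k + 1)) =ᶠ[nhds x]
      (fun x : EE N => (1 - ‖x‖ ^ 2) ^ (k + 1)) := by
    filter_upwards [isOpen_ball.mem_nhds hx] with y hy
    rw [min_eq_left]
    simpa using (mem_ball_zero_iff.1 hy).le
  have h := ((hasStrictFDerivAt_norm_sq x).hasFDerivAt.const_sub 1).pow (k + 1)
  have h' := h.congr_of_eventuallyEq e
  have := h'.hasLineDerivAt (-EuclideanSpace.single i 1)
  rw [this.lineDeriv]
  simp [EuclideanSpace.inner_single_right]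
  ring

lemma theta_fderiv_out {N k : ℕ} {x : EE N} (hx : 1 < ‖x‖) (v : EE N) :
    lineDeriv ℝ (fun x : EE N => (1 - (min ‖x‖ 1) ^ 2) ^ (k + 1)) x v = 0 := by
  have e : (fun x : EE N => (1 - (min ‖x‖ 1) ^ 2) ^ (k + 1)) =ᶠ[nhds x]
      (fun x : EE N => (0 : ℝ)) := by
    filter_upwards [(isOpen_lt continuous_const continuous_norm).mem_nhds hx] with y hy
    rw [min_eq_right]
    · simp
    · exact le_of_lt hy
  have h' := (hasFDerivAt_const (𝕜 := ℝ) (0 : ℝ) x).congr_of_eventuallyEq e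
  rw [(h'.hasLineDerivAt v).lineDeriv]
  simp

lemma core {N : ℕ} (k : ℕ) {f : EE N → ℝ} {C : NNReal} (hf : LipschitzWith C f) (i : Fin N) :
    ∫ x in ball (0 : EE N) 1, lineDeriv ℝ f x (EuclideanSpace.single i 1) * (1 - ‖x‖ ^ 2) ^ (k + 1)
      = 2 * ((k : ℝ) + 1) * ∫ x in ball (0 : EE N) 1, f x * x i * (1 - ‖x‖ ^ 2) ^ k := by
  obtain ⟨D, hD⟩ := theta_lip N k
  have hc : HasCompactSupport (fun x : EE N => (1 - (min ‖x‖ 1) ^ 2) ^ (k + 1)) := by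
    apply HasCompactSupport.intro (isCompact_closedBall (0 : EE N) 1)
    intro x hx
    have : 1 < ‖x‖ := by simpa using hx
    rw [min_eq_right this.le]; simp
  have h := LipschitzWith.integral_lineDeriv_mul_eq (μ := volume) hf hD hc (EuclideanSpace.single i 1)
  have hs : ∀ᵐ x : EE N, x ∉ sphere (0 : EE N) 1 := by
    have := Measure.addHaar_sphere_of_ne_zero (volume : Measure (EE N)) 0 one_ne_zero
    exact measure_eq_zero_iff_ae_notMem.1 this
  rw [← integral_const_mul, ← integral_indicator measurableSet_ball,
    ← integral_indicator measurableSet_ball]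
  refine Eq.trans (integral_congr_ae ?_) (h.trans (integral_congr_ae ?_))
  · filter_upwards with x
    by_cases hx : x ∈ ball (0 : EE N) 1
    · rw [indicator_of_mem hx, min_eq_left (mem_ball_zero_iff.1 hx).le]
    · rw [indicator_of_notMem hx, min_eq_right (by simpa using hx)]; simp
  · filter_upwards [hs] with x hxs
    by_cases hx : x ∈ ball (0 : EE N) 1
    · rw [indicator_of_mem hx, theta_fderiv_in hx]; ring
    · rw [indicator_of_notMem hx, theta_fderiv_out]; · simp
      have h1 : 1 ≤ ‖x‖ := by simpa using hx
      exact lt_of_le_of_ne h1 (fun h => hxs (by simpa using h.symm))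

lemma intOn {N : ℕ} {f : EE N → ℝ} (hf : Continuous f) : IntegrableOn f (ball (0 : EE N) 1) :=
  (hf.continuousOn.integrableOn_compact (isCompact_closedBall (0 : EE N) 1)).mono_set
    ball_subset_closedBall

/-- moments -/
noncomputable def mom (N k : ℕ) : ℝ := ∫ x in ball (0 : EE N) 1, (1 - ‖x‖ ^ 2) ^ k

lemma mom_rec (N k : ℕ) : ((N : ℝ) + 2 * ((k : ℝ) + 1)) * mom N (k + 1) = 2 * ((k : ℝ) + 1) * mom N k := by
  have h : ∀ i : Fin N, mom N (k + 1) = 2 * ((k : ℝ) + 1) * ∫ x in ball (0 : EE N) 1, x i ^ 2 * (1 - ‖x‖ ^ 2) ^ k := by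
    intro i
    have hl : LipschitzWith ‖(EuclideanSpace.proj i : EE N →L[ℝ] ℝ)‖₊ (fun x : EE N => x i) :=
      (EuclideanSpace.proj i : EE N →L[ℝ] ℝ).lipschitz
    have := core k hl i
    have e : ∀ x : EE N, lineDeriv ℝ (fun x : EE N => x i) x (EuclideanSpace.single i 1) = 1 := by
      intro x
      have := ((EuclideanSpace.proj i : EE N →L[ℝ] ℝ).hasFDerivAt (x := x)).hasLineDerivAt (EuclideanSpace.single i 1)
      have h2 := this.lineDeriv
      simpa using h2
    simp only [e, one_mul] at this
    unfold mom
    rw [this]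
    simp only [pow_two]
  have hsum : ∑ i : Fin N, ∫ x in ball (0 : EE N) 1, x i ^ 2 * (1 - ‖x‖ ^ 2) ^ k = mom N k - mom N (k + 1) := by
    rw [← integral_finsetSum]
    · unfold mom
      rw [← integral_sub (intOn (by fun_prop)) (intOn (by fun_prop))]
      congr 1; ext x
      rw [← Finset.sum_mul, ← EuclideanSpace.real_norm_sq_eq]
      ring
    · intro i _
      exact intOn (by fun_prop)
  have h3 : ∑ i : Fin N, mom N (k + 1) = 2 * ((k : ℝ) + 1) * (mom N k - mom N (k + 1)) := by
    rw [← hsum, Finset.mul_sum]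
    exact Finset.sum_congr rfl (fun i _ => h i)
  simp at h3
  linarith

/-- weighted means -/
noncomputable def wmean {N : ℕ} (k : ℕ) (U : EE N → ℝ) (r : ℝ) : ℝ :=
  ∫ x in ball (0 : EE N) 1, U (r • x) * (1 - ‖x‖ ^ 2) ^ k

lemma wmean_hasDeriv {N : ℕ} (k : ℕ) {U : EE N → ℝ} (hU : ContDiff ℝ 2 U)
    (hc : HasCompactSupport U) (r : ℝ) :
    HasDerivAt (wmean k U) (∫ x in ball (0 : EE N) 1, fderiv ℝ U (r • x) x * (1 - ‖x‖ ^ 2) ^ k) r := by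
  have hU' : Continuous (fderiv ℝ U) := hU.continuous_fderiv (by norm_num)
  obtain ⟨M, hM⟩ := (hc.fderiv ℝ).exists_bound_of_continuous hU'
  have hM0 : 0 ≤ M := (norm_nonneg _).trans (hM 0)
  have hUc := hU.continuous
  refine (hasDerivAt_integral_of_dominated_loc_of_deriv_le (s := univ) (bound := fun _ => M)
    (F := fun (r : ℝ) (x : EE N) => U (r • x) * (1 - ‖x‖ ^ 2) ^ k)
    (F' := fun (r : ℝ) (x : EE N) => fderiv ℝ U (r • x) x * (1 - ‖x‖ ^ 2) ^ k)
    univ_mem ?_ ?_ ?_ ?_ ?_ ?_).2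
  · filter_upwards with s
    exact (show Continuous _ by fun_prop).aestronglyMeasurable
  · exact intOn (by fun_prop)
  · exact (show Continuous _ by fun_prop).aestronglyMeasurable
  · filter_upwards [ae_restrict_mem measurableSet_ball] with x hx s _
    have hx1 : ‖x‖ < 1 := by simpa using hx
    have h2 : |(1 - ‖x‖ ^ 2) ^ k| ≤ 1 := by
      rw [abs_of_nonneg (pow_nonneg (by nlinarith [norm_nonneg x]) _)]
      exact pow_le_one₀ (by nlinarith [norm_nonneg x]) (by nlinarith [norm_nonneg x])
    have h1 : ‖fderiv ℝ U (s • x) x‖ ≤ M * 1 :=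
      (ContinuousLinearMap.le_opNorm _ _).trans (mul_le_mul (hM _) hx1.le (norm_nonneg _) hM0)
    rw [norm_mul]
    calc _ ≤ (M * 1) * 1 := mul_le_mul h1 h2 (abs_nonneg _) (by linarith)
      _ = M := by ring
  · exact intOn continuous_const
  · filter_upwards with x s _
    have h1 : HasDerivAt (fun s : ℝ => s • x) x s := by
      simpa using (hasDerivAt_id s).smul_const x
    have h2 := ((hU.differentiable (by norm_num)) (s • x)).hasFDerivAt.comp_hasDerivAt s h1
    exact h2.mul_const _

lemma lap_comp {N : ℕ} (k : ℕ) {U : EE N → ℝ} (hU : ContDiff ℝ 2 U)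
    (hc : HasCompactSupport U) (r : ℝ) :
    HasDerivAt (wmean k U) (r / (2 * ((k : ℝ) + 1)) * wmean (k + 1) (lap U) r) r := by
  have h := wmean_hasDeriv k hU hc r
  convert h using 1
  have hU' : ∀ i : Fin N, ContDiff ℝ 1 (fun y => fderiv ℝ U y (EuclideanSpace.single i 1)) := by
    intro i
    exact (hU.fderiv_right (m := 1) (by norm_num)).clm_apply contDiff_const
  have hcs : ∀ i : Fin N, HasCompactSupport (fun y => fderiv ℝ U y (EuclideanSpace.single i 1)) := by
    intro i
    exact (hc.fderiv_apply (𝕜 := ℝ) _)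
  have key : ∀ i : Fin N, ∫ x in ball (0 : EE N) 1,
      (r * fderiv ℝ (fun y => fderiv ℝ U y (EuclideanSpace.single i 1)) (r • x)
        (EuclideanSpace.single i 1)) * (1 - ‖x‖ ^ 2) ^ (k + 1) =
      2 * ((k : ℝ) + 1) * ∫ x in ball (0 : EE N) 1,
        fderiv ℝ U (r • x) (EuclideanSpace.single i 1) * x i * (1 - ‖x‖ ^ 2) ^ k := by
    intro i
    obtain ⟨C, hC⟩ := ContDiff.lipschitzWith_of_hasCompactSupport (hcs i) (hU' i) (by norm_num)
    have hl : LipschitzWith ‖r‖₊ (fun x : EE N => r • x) := lipschitzWith_smul r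
    have h2 := core k (hC.comp hl) i
    refine Eq.trans ?_ h2
    congr 1; ext x
    congr 1
    have h3 : HasFDerivAt (fun x : EE N => r • x) (r • ContinuousLinearMap.id ℝ (EE N)) x := by
      exact (hasFDerivAt_id x).const_smul r
    have h4 := (((hU' i).differentiable (by norm_num)) (r • x)).hasFDerivAt.comp x h3
    rw [(h4.hasLineDerivAt _).lineDeriv]
    simp
  have hcont2 : ∀ i : Fin N, Continuous (fun x => fderiv ℝ (fun y => fderiv ℝ U y (EuclideanSpace.single i 1)) x
        (EuclideanSpace.single i 1)) := fun i =>
    ((hU' i).continuous_fderiv (by norm_num)).clm_apply continuous_const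
  have hcont1 : ∀ i : Fin N, Continuous (fun x => fderiv ℝ U x (EuclideanSpace.single i 1)) := 
    fun i => (hU' i).continuous
  have s1 : ∑ i : Fin N, ∫ x in ball (0 : EE N) 1,
      (r * fderiv ℝ (fun y => fderiv ℝ U y (EuclideanSpace.single i 1)) (r • x)
        (EuclideanSpace.single i 1)) * (1 - ‖x‖ ^ 2) ^ (k + 1) = r * wmean (k + 1) (lap U) r := by
    rw [← integral_finsetSum]
    · unfold wmean lap
      rw [← integral_const_mul]
      congr 1; ext x
      rw [← Finset.sum_mul, ← Finset.mul_sum]; ring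
    · intro i _
      have := hcont2 i
      exact intOn (((continuous_const.mul (this.comp (continuous_const_smul r)))).mul (by fun_prop))
  have s2 : ∑ i : Fin N, ∫ x in ball (0 : EE N) 1,
        fderiv ℝ U (r • x) (EuclideanSpace.single i 1) * x i * (1 - ‖x‖ ^ 2) ^ k =
      ∫ x in ball (0 : EE N) 1, fderiv ℝ U (r • x) x * (1 - ‖x‖ ^ 2) ^ k := by
    rw [← integral_finsetSum]
    · congr 1; ext x
      rw [← Finset.sum_mul]
      congr 1
      generalize fderiv ℝ U (r • x) = L
      conv_rhs => rw [← (EuclideanSpace.basisFun (Fin N) ℝ).sum_repr x]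
      rw [map_sum]
      refine Finset.sum_congr rfl fun i _ => ?_
      simp [mul_comm]
    · intro i _
      have := hcont1 i
      exact intOn ((((this.comp (continuous_const_smul r))).mul (by fun_prop)).mul (by fun_prop))
  have s3 := Finset.sum_congr (rfl : (Finset.univ : Finset (Fin N)) = _) (fun i _ => key i)
  rw [s1, ← Finset.mul_sum, s2] at s3
  have : (2 * ((k : ℝ) + 1)) ≠ 0 := by positivity
  field_simp
  linarith

lemma lap_congr_s7 {N : ℕ} {u v : EE N → ℝ} {x : EE N} (h : u =ᶠ[nhds x] v) :
    lap u =ᶠ[nhds x] lap v := by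
  filter_upwards [h.eventually_nhds] with y hy
  unfold lap
  refine Finset.sum_congr rfl fun i _ => ?_
  have : (fun z => fderiv ℝ u z (EuclideanSpace.single i 1)) =ᶠ[nhds y]
      (fun z => fderiv ℝ v z (EuclideanSpace.single i 1)) := by
    filter_upwards [hy.eventually_nhds] with z hz
    rw [Filter.EventuallyEq.fderiv_eq hz]
  rw [this.fderiv_eq]

lemma lap_contDiff {N : ℕ} {n m : WithTop ℕ∞} {U : EE N → ℝ} (hU : ContDiff ℝ n U)
    (h : m + 1 + 1 ≤ n) : ContDiff ℝ m (lap U) := by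
  unfold lap
  refine ContDiff.sum fun i _ => ?_
  have h1 : ContDiff ℝ (m + 1) (fun y => fderiv ℝ U y (EuclideanSpace.single i 1)) :=
    (hU.fderiv_right h).clm_apply contDiff_const
  exact (h1.fderiv_right le_rfl).clm_apply contDiff_const

lemma lap_compact {N : ℕ} {U : EE N → ℝ} (hc : HasCompactSupport U) :
    HasCompactSupport (lap U) := by
  refine hc.mono' ?_
  intro x hx
  by_contra hn
  apply hx
  have h1 : U =ᶠ[nhds x] (fun _ => 0) := notMem_tsupport_iff_eventuallyEq.1 hn
  have h2 := (lap_congr_s7 h1).eq_of_nhds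
  rw [h2]
  simp [lap]

lemma cutoff {N : ℕ} {u : EE N → ℝ} (hu : ContDiffOn ℝ 4 u (closedBall (0 : EE N) 1))
    {R : ℝ} (hR0 : 0 < R) (hR : R < 1) :
    ∃ U : EE N → ℝ, ContDiff ℝ 4 U ∧ HasCompactSupport U ∧
      ∀ x ∈ ball (0 : EE N) R, U =ᶠ[nhds x] u := by
  let f : ContDiffBump (0 : EE N) := ⟨R, (R + 1) / 2, hR0, by linarith⟩
  refine ⟨fun x => f x * u x, ?_, f.hasCompactSupport.mul_right, ?_⟩
  · rw [contDiff_iff_contDiffAt]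
    intro x
    by_cases hx : x ∈ ball (0 : EE N) 1
    · exact f.contDiffAt.mul (hu.contDiffAt (Filter.mem_of_superset (isOpen_ball.mem_nhds hx)
        ball_subset_closedBall))
    · have : x ∈ (closedBall (0 : EE N) ((R + 1) / 2))ᶜ := by
        simp at hx ⊢; linarith
      have h0 : (fun x => f x * u x) =ᶠ[nhds x] fun _ => 0 := by
        filter_upwards [isClosed_closedBall.isOpen_compl.mem_nhds this] with y hy
        have : f y = 0 := by
          apply f.zero_of_le_dist
          simp at hy
          show (R + 1) / 2 ≤ _
          simpa using hy.le
        simp [this]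
      exact contDiffAt_const.congr_of_eventuallyEq h0
  · intro x hx
    filter_upwards [f.eventuallyEq_one_of_mem_ball hx] with y hy
    simp [hy]

lemma wmean_congr {N : ℕ} {u v : EE N → ℝ} (k : ℕ) {r R : ℝ} (h : ∀ x ∈ ball (0 : EE N) R, u x = v x)
    (hr : |r| ≤ R) (hR : 0 < R) : wmean k u r = wmean k v r := by
  refine setIntegral_congr_fun measurableSet_ball fun x hx => ?_
  show u (r • x) * _ = v (r • x) * _
  rw [h]
  rw [mem_ball_zero_iff] at hx ⊢
  rw [norm_smul, Real.norm_eq_abs]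
  rcases eq_or_lt_of_le (abs_nonneg r) with h0 | h0
  · rw [← h0]; simpa using hR
  · nlinarith

lemma wmean_u_deriv {N : ℕ} {u : EE N → ℝ} (hu : ContDiffOn ℝ 4 u (closedBall (0 : EE N) 1))
    (k : ℕ) {r : ℝ} (hr : |r| < 1) :
    HasDerivAt (wmean k u) (r / (2 * ((k : ℝ) + 1)) * wmean (k + 1) (lap u) r) r ∧
    HasDerivAt (wmean k (lap u)) (r / (2 * ((k : ℝ) + 1)) * wmean (k + 1) (biharm u) r) r ∧
    IntegrableOn (fun x => biharm u (r • x) * (1 - ‖x‖ ^ 2) ^ (k + 1)) (ball (0 : EE N) 1) := by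
  have hrn := abs_nonneg r
  obtain ⟨U, hU, hc, hUu⟩ := cutoff hu (R := (|r| + 1) / 2) (by linarith) (by linarith)
  have e0 : ∀ x ∈ ball (0 : EE N) ((|r| + 1) / 2), u x = U x := fun x hx => (hUu x hx).eq_of_nhds.symm
  have e1 : ∀ x ∈ ball (0 : EE N) ((|r| + 1) / 2), lap u x = lap U x :=
    fun x hx => (lap_congr_s7 (hUu x hx)).eq_of_nhds.symm
  have e2 : ∀ x ∈ ball (0 : EE N) ((|r| + 1) / 2), biharm u x = lap (lap U) x :=
    fun x hx => (lap_congr_s7 (lap_congr_s7 (hUu x hx))).eq_of_nhds.symm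
  have hR : 0 < (|r| + 1) / 2 := by linarith
  have near : ∀ᶠ s in nhds r, |s| ≤ (|r| + 1) / 2 := by
    filter_upwards [(isOpen_lt continuous_abs continuous_const).mem_nhds
      (show |r| < (|r| + 1) / 2 by linarith)] with s hs
    exact le_of_lt hs
  have hlap : ContDiff ℝ 2 (lap U) := lap_contDiff hU (by norm_num)
  have hbi : Continuous (lap (lap U)) := (lap_contDiff (m := 0) hlap (by norm_num)).continuous
  refine ⟨?_, ?_, ?_⟩
  · rw [wmean_congr (k + 1) e1 near.self_of_nhds hR]
    refine (lap_comp k (hU.of_le (by norm_num)) hc r).congr_of_eventuallyEq ?_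
    filter_upwards [near] with s hs using wmean_congr k e0 hs hR
  · rw [wmean_congr (k + 1) e2 near.self_of_nhds hR]
    refine (lap_comp k hlap (lap_compact hc) r).congr_of_eventuallyEq ?_
    filter_upwards [near] with s hs using wmean_congr k e1 hs hR
  · have : IntegrableOn (fun x => lap (lap U) (r • x) * (1 - ‖x‖ ^ 2) ^ (k + 1)) (ball (0 : EE N) 1) :=
      intOn (by fun_prop)
    refine this.congr_fun ?_ measurableSet_ball
    intro x hx
    simp only
    rw [e2]
    rw [mem_ball_zero_iff] at hx ⊢
    rw [norm_smul, Real.norm_eq_abs]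
    nlinarith [norm_nonneg x]

lemma smul_mem {N : ℕ} {r : ℝ} (h0 : 0 ≤ r) (h1 : r ≤ 1) {x : EE N} (hx : x ∈ ball (0 : EE N) 1) :
    r • x ∈ ball (0 : EE N) 1 := by
  rw [mem_ball_zero_iff] at hx ⊢
  rw [norm_smul, Real.norm_eq_abs, abs_of_nonneg h0]
  nlinarith [norm_nonneg x]

lemma L_lower {N : ℕ} {lam : ℝ} (hl : 0 < lam) {u : EE N → ℝ} (hu : IsClassicalSolution N lam u)
    {r : ℝ} (h0 : 0 ≤ r) (h1 : r < 1) : lam * mom N 2 ≤ wmean 2 (biharm u) r := by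
  have hi := (wmean_u_deriv hu.contDiffOn 1 (r := r) (by rwa [abs_of_nonneg h0])).2.2
  unfold mom wmean
  rw [← integral_const_mul]
  refine setIntegral_mono_on (intOn (by fun_prop)) hi measurableSet_ball fun x hx => ?_
  have hx' := smul_mem h0 h1.le hx
  have hp := hu.pos _ hx'
  have hlt := hu.lt_one _ hx'
  refine mul_le_mul_of_nonneg_right ?_ (by positivity)
  rw [hu.eqn _ hx', le_div_iff₀ (by nlinarith)]
  have : (1 - u (r • x)) ^ 2 ≤ 1 := by nlinarith
  nlinarith

lemma mom_pos (N k : ℕ) : 0 < mom N k := by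
  have h0 : 0 < mom N 0 := by
    unfold mom
    simp
    exact ENNReal.toReal_pos (measure_ball_pos _ _ one_pos).ne' measure_ball_lt_top.ne
  induction k with
  | zero => exact h0
  | succ k ih =>
    have := mom_rec N k
    have h2 : 0 < ((N : ℝ) + 2 * ((k : ℝ) + 1)) := by positivity
    have h3 : 0 < 2 * ((k : ℝ) + 1) * mom N k := by positivity
    rw [← this] at h3
    exact (pos_iff_pos_of_mul_pos h3).1 h2

lemma J_mono {N : ℕ} {lam : ℝ} (hl : 0 < lam) {u : EE N → ℝ} (hu : IsClassicalSolution N lam u) :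
    MonotoneOn (fun r => wmean 1 (lap u) r - lam * mom N 2 * r ^ 2 / 8) (Ico 0 1) := by
  have hd : ∀ r ∈ Ico (0 : ℝ) 1, HasDerivAt (fun r => wmean 1 (lap u) r - lam * mom N 2 * r ^ 2 / 8)
      (r / 4 * (wmean 2 (biharm u) r - lam * mom N 2)) r := by
    intro r hr
    have h1 := (wmean_u_deriv hu.contDiffOn 1 (r := r) (by rw [abs_of_nonneg hr.1]; exact hr.2)).2.1
    have h2 : HasDerivAt (fun r : ℝ => lam * mom N 2 * r ^ 2 / 8) (lam * mom N 2 * (2 * r) / 8) r := by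
      have := (((hasDerivAt_id r).pow 2).const_mul (lam * mom N 2)).div_const 8
      simpa using this
    refine (h1.sub h2).congr_deriv ?_
    push_cast
    norm_num
    ring
  refine monotoneOn_of_deriv_nonneg (convex_Ico 0 1)
    (fun r hr => (hd r hr).continuousAt.continuousWithinAt) ?_ ?_
  · intro r hr
    exact (hd r (interior_subset hr)).differentiableAt.differentiableWithinAt
  · intro r hr
    have hr' := interior_subset hr
    rw [(hd r hr').deriv]
    have := L_lower hl hu hr'.1 hr'.2
    exact mul_nonneg (by linarith [hr'.1]) (by linarith)

lemma I_deriv {N : ℕ} {lam : ℝ} {u : EE N → ℝ} (hu : IsClassicalSolution N lam u) {r : ℝ}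
    (hr : r ∈ Ico (0 : ℝ) 1) : HasDerivAt (wmean 0 u) (r / 2 * wmean 1 (lap u) r) r := by
  have h1 := (wmean_u_deriv hu.contDiffOn 0 (r := r) (by rw [abs_of_nonneg hr.1]; exact hr.2)).1
  convert h1 using 1
  push_cast; ring

lemma u_contOn {N : ℕ} {lam : ℝ} {u : EE N → ℝ} (hu : IsClassicalSolution N lam u) :
    ContinuousOn u (ball (0 : EE N) 1) := hu.contDiffOn.continuousOn.mono ball_subset_closedBall

lemma I_cont {N : ℕ} {lam : ℝ} {u : EE N → ℝ} (hu : IsClassicalSolution N lam u) :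
    ContinuousOn (wmean 0 u) (Icc 0 1) := by
  refine continuousOn_of_dominated (bound := fun _ => 1) ?_ ?_ ?_ ?_
  · intro r hr
    refine ContinuousOn.aestronglyMeasurable ?_ measurableSet_ball
    refine ContinuousOn.mul ?_ (by fun_prop)
    exact (u_contOn hu).comp (by fun_prop) (fun x hx => smul_mem hr.1 hr.2 hx)
  · intro r hr
    filter_upwards [ae_restrict_mem measurableSet_ball] with x hx
    have hx' := smul_mem hr.1 hr.2 hx
    have hp := hu.pos _ hx'
    have hlt := hu.lt_one _ hx'
    simp only [pow_zero, mul_one]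
    rw [Real.norm_eq_abs, abs_of_pos hp]; exact hlt.le
  · exact intOn continuous_const
  · filter_upwards [ae_restrict_mem measurableSet_ball] with x hx
    refine ContinuousOn.mul ?_ (by fun_prop)
    exact (u_contOn hu).comp (by fun_prop) (fun r hr => smul_mem hr.1 hr.2 hx)

lemma u_intOn {N : ℕ} {lam : ℝ} {u : EE N → ℝ} (hu : IsClassicalSolution N lam u) :
    IntegrableOn u (ball (0 : EE N) 1) :=
  (hu.contDiffOn.continuousOn.integrableOn_compact (isCompact_closedBall (0 : EE N) 1)).mono_set
    ball_subset_closedBall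

lemma bdry_small {N : ℕ} {lam : ℝ} {u : EE N → ℝ} (hu : IsClassicalSolution N lam u) {ε : ℝ}
    (hε : 0 < ε) : ∃ ρ < 1, ∀ x ∈ ball (0 : EE N) 1, ρ < ‖x‖ → u x ≤ ε := by
  let K : Set (EE N) := closedBall (0 : EE N) 1 ∩ u ⁻¹' (Ici ε)
  have hK : IsCompact K := by
    refine (isCompact_closedBall (0 : EE N) 1).of_isClosed_subset ?_ inter_subset_left
    exact hu.contDiffOn.continuousOn.preimage_isClosed_of_isClosed isClosed_closedBall isClosed_Ici
  rcases K.eq_empty_or_nonempty with h | h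
  · refine ⟨0, one_pos, fun x hx _ => ?_⟩
    by_contra hn
    have : x ∈ K := ⟨ball_subset_closedBall hx, le_of_lt (not_le.1 hn)⟩
    rw [h] at this; exact this
  · obtain ⟨y, hy, hmax⟩ := hK.exists_isMaxOn h continuous_norm.continuousOn
    refine ⟨‖y‖, ?_, fun x hx hxy => ?_⟩
    · have h1 : ‖y‖ ≤ 1 := by simpa using hy.1
      refine lt_of_le_of_ne h1 fun h2 => ?_
      have := hu.bdry y h2
      have h3 : ε ≤ u y := hy.2
      linarith
    · by_contra hn
      have : x ∈ K := ⟨ball_subset_closedBall hx, le_of_lt (not_le.1 hn)⟩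
      have h4 : ‖x‖ ≤ ‖y‖ := hmax this
      linarith

lemma I_diff {N : ℕ} {lam : ℝ} {u : EE N → ℝ} (hu : IsClassicalSolution N lam u)
    {ε ρ r : ℝ} (hε : 0 < ε) (hρ : ∀ x ∈ ball (0 : EE N) 1, ρ < ‖x‖ → u x ≤ ε) (hr0 : 0 < r) (hr1 : r < 1)
    (hρr : ρ < r) : wmean 0 u 1 - wmean 0 u r ≤ ε * mom N 0 * (N * (1 - r)) := by
  have hsub : ball (0 : EE N) r ⊆ ball (0 : EE N) 1 := ball_subset_ball hr1.le
  have i1 : wmean 0 u 1 = ∫ x in ball (0 : EE N) 1, u x := by simp [wmean]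
  have hrN : 0 < r ^ N := pow_pos hr0 N
  have hrN1 : r ^ N ≤ 1 := pow_le_one₀ hr0.le hr1.le
  have hF0 : 0 ≤ ∫ x in ball (0 : EE N) r, u x :=
    setIntegral_nonneg measurableSet_ball fun x hx => (hu.pos x (hsub hx)).le
  have i2 : ∫ x in ball (0 : EE N) r, u x ≤ wmean 0 u r := by
    have h1 : wmean 0 u r = (r ^ N)⁻¹ * ∫ x in ball (0 : EE N) r, u x := by
      have := Measure.setIntegral_comp_smul_of_pos (volume : Measure (EE N)) u (ball 0 1) hr0
      rw [smul_unitBall_of_pos hr0] at this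
      simpa [wmean] using this
    rw [h1]
    exact le_mul_of_one_le_left hF0 ((one_le_inv₀ hrN).2 hrN1)
  have i3 : ∫ x in ball (0 : EE N) 1 \ ball 0 r, u x
      = (∫ x in ball (0 : EE N) 1, u x) - ∫ x in ball (0 : EE N) r, u x :=
    setIntegral_sdiff measurableSet_ball (u_intOn hu) hsub
  have i4 : ∫ x in ball (0 : EE N) 1 \ ball 0 r, u x ≤ ∫ x in ball (0 : EE N) 1 \ ball 0 r, ε := by
    refine setIntegral_mono_on ((u_intOn hu).mono_set sdiff_subset)
      ((intOn continuous_const).mono_set sdiff_subset) (measurableSet_ball.diff measurableSet_ball) ?_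
    intro x hx
    refine hρ x hx.1 ?_
    have : r ≤ ‖x‖ := by simpa using hx.2
    linarith
  have i5 : ∫ x in ball (0 : EE N) 1 \ ball 0 r, ε = ε * mom N 0 * (1 - r ^ N) := by
    rw [setIntegral_sdiff measurableSet_ball (intOn continuous_const) hsub]
    have hm : mom N 0 = volume.real (ball (0 : EE N) 1) := by simp [mom]
    have hv : volume.real (ball (0 : EE N) r) = r ^ N * volume.real (ball (0 : EE N) 1) := by
      simp only [Measure.real]
      rw [Measure.addHaar_ball_of_pos _ _ hr0, ENNReal.toReal_mul, ENNReal.toReal_ofReal (by positivity)]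
      simp
    rw [setIntegral_const, setIntegral_const, hv, hm]
    simp only [smul_eq_mul]; ring
  have bern : 1 - r ^ N ≤ N * (1 - r) := by
    have := one_add_mul_le_pow (a := r - 1) (by linarith) N
    have e : 1 + (r - 1) = r := by ring
    rw [e] at this
    linarith
  have hm := mom_pos N 0
  calc wmean 0 u 1 - wmean 0 u r ≤ ε * mom N 0 * (1 - r ^ N) := by linarith
    _ ≤ _ := mul_le_mul_of_nonneg_left bern (by positivity)

lemma J_nonpos {N : ℕ} (hN : 0 < N) {lam : ℝ} (hl : 0 < lam) {u : EE N → ℝ}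
    (hu : IsClassicalSolution N lam u) {r : ℝ} (hr0 : 0 < r) (hr1 : r < 1) :
    wmean 1 (lap u) r ≤ 0 := by
  by_contra hn
  push Not at hn
  set j := wmean 1 (lap u) r with hj
  have hm := mom_pos N 0
  have hm2 := mom_pos N 2
  have hNr : (0 : ℝ) < N := by exact_mod_cast hN
  have hJ : ∀ s ∈ Ico r 1, j ≤ wmean 1 (lap u) s := by
    intro s hs
    have := J_mono hl hu (show r ∈ Ico (0:ℝ) 1 from ⟨hr0.le, hr1⟩)
      (show s ∈ Ico (0:ℝ) 1 from ⟨hr0.le.trans hs.1, hs.2⟩) hs.1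
    simp only at this
    have h2 : lam * mom N 2 * r ^ 2 ≤ lam * mom N 2 * s ^ 2 :=
      mul_le_mul_of_nonneg_left (pow_le_pow_left₀ hr0.le hs.1 2) (by positivity)
    linarith
  have hmono : MonotoneOn (fun s => wmean 0 u s - r / 2 * j * s) (Icc r 1) := by
    have hd : ∀ s ∈ Ico r 1, HasDerivAt (fun s => wmean 0 u s - r / 2 * j * s)
        (s / 2 * wmean 1 (lap u) s - r / 2 * j) s := by
      intro s hs
      have h1 := I_deriv hu (show s ∈ Ico (0:ℝ) 1 from ⟨hr0.le.trans hs.1, hs.2⟩)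
      have h2 := (hasDerivAt_id s).const_mul (r / 2 * j)
      exact (h1.sub h2).congr_deriv (by simp)
    refine monotoneOn_of_deriv_nonneg (convex_Icc r 1) ?_ ?_ ?_
    · exact ((I_cont hu).mono (Icc_subset_Icc_left hr0.le)).sub (by fun_prop)
    · intro s hs
      rw [interior_Icc] at hs
      exact (hd s ⟨hs.1.le, hs.2⟩).differentiableAt.differentiableWithinAt
    · intro s hs
      rw [interior_Icc] at hs
      rw [(hd s ⟨hs.1.le, hs.2⟩).deriv]
      have := hJ s ⟨hs.1.le, hs.2⟩
      have h3 : r / 2 * j ≤ s / 2 * wmean 1 (lap u) s :=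
        mul_le_mul (by linarith [hs.1]) this hn.le (by linarith [hs.1])
      linarith
  have hε : 0 < r * j / (4 * (mom N 0 * N)) := by positivity
  obtain ⟨ρ, hρ1, hρ⟩ := bdry_small hu hε
  obtain ⟨s, hs1, hs2⟩ := exists_between (max_lt hr1 hρ1)
  have hrs : r < s := lt_of_le_of_lt (le_max_left _ _) hs1
  have hd := I_diff hu hε hρ (hr0.trans hrs) hs2 (lt_of_le_of_lt (le_max_right _ _) hs1)
  have hmm := hmono (show s ∈ Icc r 1 from ⟨hrs.le, hs2.le⟩) (show (1:ℝ) ∈ Icc r 1 from ⟨hr1.le, le_rfl⟩) hs2.le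
  simp only at hmm
  have e : r * j / (4 * (mom N 0 * N)) * mom N 0 * (N * (1 - s)) = r * j / 4 * (1 - s) := by
    field_simp
  rw [e] at hd
  have : 0 < r * j * (1 - s) := by
    have : 0 < 1 - s := by linarith
    positivity
  nlinarith

lemma J_upper {N : ℕ} (hN : 0 < N) {lam : ℝ} (hl : 0 < lam) {u : EE N → ℝ}
    (hu : IsClassicalSolution N lam u) {r : ℝ} (hr0 : 0 < r) (hr1 : r < 1) :
    wmean 1 (lap u) r ≤ - (lam * mom N 2 * (1 - r ^ 2) / 8) := by
  have h : ∀ s ∈ Ioo r 1, wmean 1 (lap u) r ≤ - (lam * mom N 2 * (s ^ 2 - r ^ 2) / 8) := by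
    intro s hs
    have h1 := J_mono hl hu (show r ∈ Ico (0:ℝ) 1 from ⟨hr0.le, hr1⟩)
      (show s ∈ Ico (0:ℝ) 1 from ⟨(hr0.trans hs.1).le, hs.2⟩) hs.1.le
    simp only at h1
    have h2 := J_nonpos hN hl hu (hr0.trans hs.1) hs.2
    linarith
  have hc : ContinuousOn (fun s : ℝ => - (lam * mom N 2 * (s ^ 2 - r ^ 2) / 8)) (closure (Ioo r 1)) := by
    fun_prop
  refine ContinuousWithinAt.closure_le (s := Ioo r 1) (x := (1 : ℝ)) (f := fun _ => wmean 1 (lap u) r)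
    (g := fun s : ℝ => - (lam * mom N 2 * (s ^ 2 - r ^ 2) / 8)) ?_ continuousWithinAt_const
    (by fun_prop) h |>.trans (by simp)
  rw [closure_Ioo hr1.ne]
  exact ⟨hr1.le, le_rfl⟩

lemma final_bound {N : ℕ} (hN : 0 < N) {lam : ℝ} (hl : 0 < lam) {u : EE N → ℝ}
    (hu : IsClassicalSolution N lam u) : lam * mom N 2 ≤ 64 * mom N 0 := by
  set l := lam * mom N 2 with hll
  have hanti : AntitoneOn (fun r => wmean 0 u r + l * r ^ 2 / 32 - l * r ^ 4 / 64) (Icc 0 1) := by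
    have hd : ∀ r ∈ Ioo (0 : ℝ) 1, HasDerivAt (fun r => wmean 0 u r + l * r ^ 2 / 32 - l * r ^ 4 / 64)
        (r / 2 * (wmean 1 (lap u) r + l * (1 - r ^ 2) / 8)) r := by
      intro r hr
      have h1 := I_deriv hu (show r ∈ Ico (0:ℝ) 1 from ⟨hr.1.le, hr.2⟩)
      have h2 := (((hasDerivAt_id r).pow 2).const_mul l).div_const 32
      have h3 := (((hasDerivAt_id r).pow 4).const_mul l).div_const 64
      refine ((h1.add h2).sub h3).congr_deriv ?_
      simp
      ring
    refine antitoneOn_of_deriv_nonpos (convex_Icc 0 1) ?_ ?_ ?_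
    · exact ((I_cont hu).add (by fun_prop)).sub (by fun_prop)
    · intro s hs
      rw [interior_Icc] at hs
      exact (hd s hs).differentiableAt.differentiableWithinAt
    · intro s hs
      rw [interior_Icc] at hs
      rw [(hd s hs).deriv]
      have := J_upper hN hl hu hs.1 hs.2
      exact mul_nonpos_of_nonneg_of_nonpos (by linarith [hs.1]) (by linarith)
  have h := hanti (left_mem_Icc.2 zero_le_one) (right_mem_Icc.2 zero_le_one) zero_le_one
  simp only at h
  have h1 : 0 ≤ wmean 0 u 1 := by
    refine setIntegral_nonneg measurableSet_ball fun x hx => ?_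
    simpa using (hu.pos x hx).le
  have h0 : wmean 0 u 0 = u 0 * mom N 0 := by
    simp [wmean, mom, mul_comm]
  have hu0 := hu.lt_one 0 (mem_ball_self one_pos)
  have hm := mom_pos N 0
  rw [h0] at h
  nlinarith

/-- for N ≥ 31, the pull-in voltage satisfies λ* ≤ 27 λ̄_N,
i.e. every voltage admitting a classical solution is at most `27 λ̄_N = 24(N-2/3)(N-8/3)`. -/
theorem pullIn_le_of_dim_ge_31 (N : ℕ) (hN : 31 ≤ N) :
    ∀ lam ∈ solSet N, lam ≤ 27 * lamBar N := by
  rintro lam ⟨hl, u, hu⟩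
  have h := final_bound (by omega) hl hu
  have r0 := mom_rec N 0
  have r1 := mom_rec N 1
  have hm2 := mom_pos N 2
  have hNr : (31 : ℝ) ≤ N := by exact_mod_cast hN
  norm_num at r0 r1
  have h0 : mom N 0 = ((N : ℝ) + 2) * ((N : ℝ) + 4) / 8 * mom N 2 := by
    linear_combination (-1 / 2) * r0 - (N + 2) / 8 * r1
  rw [h0] at h
  have h2 : lam ≤ 8 * (((N : ℝ) + 2) * ((N : ℝ) + 4)) := by
    refine le_of_mul_le_mul_right ?_ hm2
    linarith
  unfold lamBar
  nlinarith
end
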